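/- arXiv:2102.06451 — 3 statements merged into one kernel-verified Lean document; each statement's English description precedes it below -/
import Mathlib

section
/- Fix ε ∈ {1, −1}, real numbers k > 0, m ≥ 0, and set ⟨z, z̄⟩ = |z₁|² + ε|z₂|² and K(z,z) = k z₁² + m z₂². Let F : ℂ³ → ℝ (coordinates (z₁, z₂, ζ)) be the real polynomial F = ⟨z, z̄⟩ + F₃ + F₄, where F₃ = 2Re( K(z,z)·conj(ζ) + A₁(z)·|ζ|² + A₂·ζ²·conj(ζ) ) and F₄ = 2Re( (P(z,z,z̄) + Q(z,z,z))·conj(ζ) + R(z,z)·conj(ζ)² ) + S(z,z̄)·|ζ|² + T(z,z,z̄,z̄) + 2Re( B₁(z,z)·|ζ|² + B₂(z)·ζ²·conj(ζ) + B₃(z)·ζ·conj(ζ)² ), with A₁, B₂, B₃ complex linear forms in z, A₂ ∈ ℂ, P a form of bidegree (2,1) in (z, z̄), Q and B₁ complex forms in z of degrees 3 and 2, R a complex quadratic form in z, S a real form of bidegree (1,1), and T a real form of bidegree (2,2). Let H(p) be the 3×3 complex Hessian matrix (∂²F/∂ξ_i ∂conj(ξ_j))(p), ξ = (z₁,z₂,ζ),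 taken with Wirtinger derivatives. If every homogeneous Taylor component of det H at 0 of degree ≤ 2 vanishes, then A₁ = 0, A₂ = 0, B₁ = 0, B₂ = 0, B₃ = 0, and S(z,z̄) = 4(k²|z₁|² + ε m²|z₂|²). -/
open Complex ComplexConjugate Filter Topology

/-- The polarization `𝔽(ξ, η)` of the real polynomial
`F = ⟨z,z̄⟩ + F₃ + F₄` of Lemma 8 (diagonal Hermitian form `|z₁|² + ε |z₂|²`,
`K = k z₁² + m z₂²`), so that `F p = 𝔽 (p, conj p)`.  Here `ξ = (z₁, z₂, ζ)` and
`η` stands for `(z̄₁, z̄₂, ζ̄)`; `𝔽` is holomorphic (polynomial) in each argument. -/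
noncomputable def Fc (ε k m : ℝ) (A1 : Fin 2 → ℂ) (A2 : ℂ)
    (P Q : Fin 2 → Fin 2 → Fin 2 → ℂ) (R : Fin 2 → Fin 2 → ℂ)
    (S : Matrix (Fin 2) (Fin 2) ℂ) (T : Fin 2 → Fin 2 → Fin 2 → Fin 2 → ℂ)
    (B1 : Fin 2 → Fin 2 → ℂ) (B2 B3 : Fin 2 → ℂ)
    (ξ η : Fin 3 → ℂ) : ℂ :=
  -- ⟨z, z̄⟩ = |z₁|² + ε |z₂|²
  ξ 0 * η 0 + (ε : ℂ) * ξ 1 * η 1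
  -- 2 Re (K(z,z) ζ̄)
  + (((k : ℂ) * ξ 0 ^ 2 + (m : ℂ) * ξ 1 ^ 2) * η 2
      + ((k : ℂ) * η 0 ^ 2 + (m : ℂ) * η 1 ^ 2) * ξ 2)
  -- 2 Re (A₁(z) |ζ|²)
  + ((∑ i, A1 i * ξ i.castSucc) * ξ 2 * η 2
      + (∑ i, conj (A1 i) * η i.castSucc) * η 2 * ξ 2)
  -- 2 Re (A₂ ζ² ζ̄)
  + (A2 * ξ 2 ^ 2 * η 2 + conj A2 * η 2 ^ 2 * ξ 2)
  -- 2 Re (P(z,z,z̄) ζ̄)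
  + ((∑ i, ∑ j, ∑ l, P i j l * ξ i.castSucc * ξ j.castSucc * η l.castSucc) * η 2
      + (∑ i, ∑ j, ∑ l, conj (P i j l) * η i.castSucc * η j.castSucc * ξ l.castSucc) * ξ 2)
  -- 2 Re (Q(z,z,z) ζ̄)
  + ((∑ i, ∑ j, ∑ l, Q i j l * ξ i.castSucc * ξ j.castSucc * ξ l.castSucc) * η 2
      + (∑ i, ∑ j, ∑ l, conj (Q i j l) * η i.castSucc * η j.castSucc * η l.castSucc) * ξ 2)
  -- 2 Re (R(z,z) ζ̄²)
  + ((∑ i, ∑ j, R i j * ξ i.castSucc * ξ j.castSucc) * η 2 ^ 2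
      + (∑ i, ∑ j, conj (R i j) * η i.castSucc * η j.castSucc) * ξ 2 ^ 2)
  -- S(z,z̄) |ζ|²
  + (∑ i, ∑ j, S i j * ξ i.castSucc * η j.castSucc) * ξ 2 * η 2
  -- T(z,z,z̄,z̄)
  + (∑ i, ∑ j, ∑ l, ∑ o, T i j l o * ξ i.castSucc * ξ j.castSucc * η l.castSucc * η o.castSucc)
  -- 2 Re (B₁(z,z) |ζ|²)
  + ((∑ i, ∑ j, B1 i j * ξ i.castSucc * ξ j.castSucc) * ξ 2 * η 2
      + (∑ i, ∑ j, conj (B1 i j) * η i.castSucc * η j.castSucc) * η 2 * ξ 2)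
  -- 2 Re (B₂(z) ζ² ζ̄)
  + ((∑ i, B2 i * ξ i.castSucc) * ξ 2 ^ 2 * η 2
      + (∑ i, conj (B2 i) * η i.castSucc) * η 2 ^ 2 * ξ 2)
  -- 2 Re (B₃(z) ζ ζ̄²)
  + ((∑ i, B3 i * ξ i.castSucc) * ξ 2 * η 2 ^ 2
      + (∑ i, conj (B3 i) * η i.castSucc) * η 2 * ξ 2 ^ 2)

/-- The complex (Wirtinger) Hessian `(∂²F/∂ξᵢ∂ξ̄ⱼ)(p)` of the real function
`F p = 𝔽 (p, conj p)`, computed through the polarization `𝔽`. -/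
noncomputable def wirtHess (𝔽 : (Fin 3 → ℂ) → (Fin 3 → ℂ) → ℂ) (p : Fin 3 → ℂ) :
    Matrix (Fin 3) (Fin 3) ℂ :=
  Matrix.of fun i j =>
    deriv (fun t : ℂ =>
      deriv (fun s : ℂ =>
          𝔽 (Function.update p i t) (Function.update (fun l => conj (p l)) j s))
        (conj (p j))) (p i)


theorem deriv_hmul_aux (c x : ℂ) : deriv (HMul.hMul c) x = c := by
  have : (HMul.hMul c : ℂ → ℂ) = fun y => c * y := rfl
  rw [this]; simp

set_option maxHeartbeats 4000000 in
theorem hess00 (ε k m : ℝ) (A1 : Fin 2 → ℂ) (A2 : ℂ)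
    (P Q : Fin 2 → Fin 2 → Fin 2 → ℂ) (R : Fin 2 → Fin 2 → ℂ)
    (S : Matrix (Fin 2) (Fin 2) ℂ) (T : Fin 2 → Fin 2 → Fin 2 → Fin 2 → ℂ)
    (B1 : Fin 2 → Fin 2 → ℂ) (B2 B3 : Fin 2 → ℂ) (p : Fin 3 → ℂ)  (t : ℝ) :
    wirtHess (Fc ε k m A1 A2 P Q R S T B1 B2 B3) (t • p) 0 0 = 1 + t * 0 + t^2 * (wirtHess (Fc ε k m A1 A2 P Q R S T B1 B2 B3) p 0 0 - 1 - 0) := by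
  simp only [wirtHess, Fc, Matrix.of_apply, Fin.sum_univ_two]
  simp
  simp (disch := fun_prop) only [deriv_fun_add, deriv_fun_mul, deriv_const, deriv_fun_pow, deriv_id'', deriv_hmul_aux, mul_zero, zero_mul, add_zero, zero_add, mul_one]
  ring_nf

set_option maxHeartbeats 4000000 in
theorem hess01 (ε k m : ℝ) (A1 : Fin 2 → ℂ) (A2 : ℂ)
    (P Q : Fin 2 → Fin 2 → Fin 2 → ℂ) (R : Fin 2 → Fin 2 → ℂ)
    (S : Matrix (Fin 2) (Fin 2) ℂ) (T : Fin 2 → Fin 2 → Fin 2 → Fin 2 → ℂ)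
    (B1 : Fin 2 → Fin 2 → ℂ) (B2 B3 : Fin 2 → ℂ) (p : Fin 3 → ℂ)  (t : ℝ) :
    wirtHess (Fc ε k m A1 A2 P Q R S T B1 B2 B3) (t • p) 0 1 = 0 + t * 0 + t^2 * (wirtHess (Fc ε k m A1 A2 P Q R S T B1 B2 B3) p 0 1 - 0 - 0) := by
  simp only [wirtHess, Fc, Matrix.of_apply, Fin.sum_univ_two]
  simp
  simp (disch := fun_prop) only [deriv_fun_add, deriv_fun_mul, deriv_const, deriv_fun_pow, deriv_id'', deriv_hmul_aux, mul_zero, zero_mul, add_zero, zero_add, mul_one]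
  ring_nf

set_option maxHeartbeats 4000000 in
theorem hess02 (ε k m : ℝ) (A1 : Fin 2 → ℂ) (A2 : ℂ)
    (P Q : Fin 2 → Fin 2 → Fin 2 → ℂ) (R : Fin 2 → Fin 2 → ℂ)
    (S : Matrix (Fin 2) (Fin 2) ℂ) (T : Fin 2 → Fin 2 → Fin 2 → Fin 2 → ℂ)
    (B1 : Fin 2 → Fin 2 → ℂ) (B2 B3 : Fin 2 → ℂ) (p : Fin 3 → ℂ)  (t : ℝ) :
    wirtHess (Fc ε k m A1 A2 P Q R S T B1 B2 B3) (t • p) 0 2 = 0 + t * (2*k*p 0 + A1 0 * p 2) + t^2 * (wirtHess (Fc ε k m A1 A2 P Q R S T B1 B2 B3) p 0 2 - 0 - (2*k*p 0 + A1 0 * p 2)) := by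
  simp only [wirtHess, Fc, Matrix.of_apply, Fin.sum_univ_two]
  simp
  simp (disch := fun_prop) only [deriv_fun_add, deriv_fun_mul, deriv_const, deriv_fun_pow, deriv_id'', deriv_hmul_aux, mul_zero, zero_mul, add_zero, zero_add, mul_one]
  ring_nf

set_option maxHeartbeats 4000000 in
theorem hess10 (ε k m : ℝ) (A1 : Fin 2 → ℂ) (A2 : ℂ)
    (P Q : Fin 2 → Fin 2 → Fin 2 → ℂ) (R : Fin 2 → Fin 2 → ℂ)
    (S : Matrix (Fin 2) (Fin 2) ℂ) (T : Fin 2 → Fin 2 → Fin 2 → Fin 2 → ℂ)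
    (B1 : Fin 2 → Fin 2 → ℂ) (B2 B3 : Fin 2 → ℂ) (p : Fin 3 → ℂ)  (t : ℝ) :
    wirtHess (Fc ε k m A1 A2 P Q R S T B1 B2 B3) (t • p) 1 0 = 0 + t * 0 + t^2 * (wirtHess (Fc ε k m A1 A2 P Q R S T B1 B2 B3) p 1 0 - 0 - 0) := by
  simp only [wirtHess, Fc, Matrix.of_apply, Fin.sum_univ_two]
  simp
  simp (disch := fun_prop) only [deriv_fun_add, deriv_fun_mul, deriv_const, deriv_fun_pow, deriv_id'', deriv_hmul_aux, mul_zero, zero_mul, add_zero, zero_add, mul_one]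
  ring_nf

set_option maxHeartbeats 4000000 in
theorem hess11 (ε k m : ℝ) (A1 : Fin 2 → ℂ) (A2 : ℂ)
    (P Q : Fin 2 → Fin 2 → Fin 2 → ℂ) (R : Fin 2 → Fin 2 → ℂ)
    (S : Matrix (Fin 2) (Fin 2) ℂ) (T : Fin 2 → Fin 2 → Fin 2 → Fin 2 → ℂ)
    (B1 : Fin 2 → Fin 2 → ℂ) (B2 B3 : Fin 2 → ℂ) (p : Fin 3 → ℂ)  (t : ℝ) :
    wirtHess (Fc ε k m A1 A2 P Q R S T B1 B2 B3) (t • p) 1 1 = (ε:ℂ) + t * 0 + t^2 * (wirtHess (Fc ε k m A1 A2 P Q R S T B1 B2 B3) p 1 1 - (ε:ℂ) - 0) := by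
  simp only [wirtHess, Fc, Matrix.of_apply, Fin.sum_univ_two]
  simp
  simp (disch := fun_prop) only [deriv_fun_add, deriv_fun_mul, deriv_const, deriv_fun_pow, deriv_id'', deriv_hmul_aux, mul_zero, zero_mul, add_zero, zero_add, mul_one]
  ring_nf

set_option maxHeartbeats 4000000 in
theorem hess12 (ε k m : ℝ) (A1 : Fin 2 → ℂ) (A2 : ℂ)
    (P Q : Fin 2 → Fin 2 → Fin 2 → ℂ) (R : Fin 2 → Fin 2 → ℂ)
    (S : Matrix (Fin 2) (Fin 2) ℂ) (T : Fin 2 → Fin 2 → Fin 2 → Fin 2 → ℂ)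
    (B1 : Fin 2 → Fin 2 → ℂ) (B2 B3 : Fin 2 → ℂ) (p : Fin 3 → ℂ)  (t : ℝ) :
    wirtHess (Fc ε k m A1 A2 P Q R S T B1 B2 B3) (t • p) 1 2 = 0 + t * (2*m*p 1 + A1 1 * p 2) + t^2 * (wirtHess (Fc ε k m A1 A2 P Q R S T B1 B2 B3) p 1 2 - 0 - (2*m*p 1 + A1 1 * p 2)) := by
  simp only [wirtHess, Fc, Matrix.of_apply, Fin.sum_univ_two]
  simp
  simp (disch := fun_prop) only [deriv_fun_add, deriv_fun_mul, deriv_const, deriv_fun_pow, deriv_id'', deriv_hmul_aux, mul_zero, zero_mul, add_zero, zero_add, mul_one]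
  ring_nf

set_option maxHeartbeats 4000000 in
theorem hess20 (ε k m : ℝ) (A1 : Fin 2 → ℂ) (A2 : ℂ)
    (P Q : Fin 2 → Fin 2 → Fin 2 → ℂ) (R : Fin 2 → Fin 2 → ℂ)
    (S : Matrix (Fin 2) (Fin 2) ℂ) (T : Fin 2 → Fin 2 → Fin 2 → Fin 2 → ℂ)
    (B1 : Fin 2 → Fin 2 → ℂ) (B2 B3 : Fin 2 → ℂ) (p : Fin 3 → ℂ)  (t : ℝ) :
    wirtHess (Fc ε k m A1 A2 P Q R S T B1 B2 B3) (t • p) 2 0 = 0 + t * (2*k*conj (p 0) + conj (A1 0) * conj (p 2)) + t^2 * (wirtHess (Fc ε k m A1 A2 P Q R S T B1 B2 B3) p 2 0 - 0 - (2*k*conj (p 0) + conj (A1 0) * conj (p 2))) := by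
  simp only [wirtHess, Fc, Matrix.of_apply, Fin.sum_univ_two]
  simp
  simp (disch := fun_prop) only [deriv_fun_add, deriv_fun_mul, deriv_const, deriv_fun_pow, deriv_id'', deriv_hmul_aux, mul_zero, zero_mul, add_zero, zero_add, mul_one]
  ring_nf

set_option maxHeartbeats 4000000 in
theorem hess21 (ε k m : ℝ) (A1 : Fin 2 → ℂ) (A2 : ℂ)
    (P Q : Fin 2 → Fin 2 → Fin 2 → ℂ) (R : Fin 2 → Fin 2 → ℂ)
    (S : Matrix (Fin 2) (Fin 2) ℂ) (T : Fin 2 → Fin 2 → Fin 2 → Fin 2 → ℂ)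
    (B1 : Fin 2 → Fin 2 → ℂ) (B2 B3 : Fin 2 → ℂ) (p : Fin 3 → ℂ)  (t : ℝ) :
    wirtHess (Fc ε k m A1 A2 P Q R S T B1 B2 B3) (t • p) 2 1 = 0 + t * (2*m*conj (p 1) + conj (A1 1) * conj (p 2)) + t^2 * (wirtHess (Fc ε k m A1 A2 P Q R S T B1 B2 B3) p 2 1 - 0 - (2*m*conj (p 1) + conj (A1 1) * conj (p 2))) := by
  simp only [wirtHess, Fc, Matrix.of_apply, Fin.sum_univ_two]
  simp
  simp (disch := fun_prop) only [deriv_fun_add, deriv_fun_mul, deriv_const, deriv_fun_pow, deriv_id'', deriv_hmul_aux, mul_zero, zero_mul, add_zero, zero_add, mul_one]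
  ring_nf

set_option maxHeartbeats 4000000 in
theorem hess22 (ε k m : ℝ) (A1 : Fin 2 → ℂ) (A2 : ℂ)
    (P Q : Fin 2 → Fin 2 → Fin 2 → ℂ) (R : Fin 2 → Fin 2 → ℂ)
    (S : Matrix (Fin 2) (Fin 2) ℂ) (T : Fin 2 → Fin 2 → Fin 2 → Fin 2 → ℂ)
    (B1 : Fin 2 → Fin 2 → ℂ) (B2 B3 : Fin 2 → ℂ) (p : Fin 3 → ℂ)  :
    wirtHess (Fc ε k m A1 A2 P Q R S T B1 B2 B3) p 2 2 = (A1 0 * p 0 + A1 1 * p 1 + conj (A1 0) * conj (p 0) + conj (A1 1) * conj (p 1) + 2*A2*p 2 + 2*conj A2*conj (p 2)) + (S 0 0 * p 0 * conj (p 0) + S 0 1 * p 0 * conj (p 1) + S 1 0 * p 1 * conj (p 0) + S 1 1 * p 1 * conj (p 1)) + (B1 0 0 * p 0 * p 0 + (B1 0 1 + B1 1 0) * p 0 * p 1 + B1 1 1 * p 1 * p 1) + (conj (B1 0 0) * conj (p 0) * conj (p 0) + (conj (B1 0 1) + conj (B1 1 0)) * conj (p 0) * conj (p 1) + conj (B1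 1 1) * conj (p 1) * conj (p 1)) + 2 * (B2 0 * p 0 + B2 1 * p 1) * p 2 + 2 * (conj (B2 0) * conj (p 0) + conj (B2 1) * conj (p 1)) * conj (p 2) + 2 * (B3 0 * p 0 + B3 1 * p 1) * conj (p 2) + 2 * (conj (B3 0) * conj (p 0) + conj (B3 1) * conj (p 1)) * p 2 := by
  simp only [wirtHess, Fc, Matrix.of_apply, Fin.sum_univ_two]
  simp
  simp (disch := fun_prop) only [deriv_fun_add, deriv_fun_mul, deriv_const, deriv_fun_pow, deriv_id'', deriv_hmul_aux, mul_zero, zero_mul, add_zero, zero_add, mul_one]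
  ring_nf


theorem lim_aux (α β : ℂ) (g : ℝ → ℂ) (hg : Continuous g)
    (h : Tendsto (fun t : ℝ => ((t : ℂ) * α + (t : ℂ)^2 * β + (t : ℂ)^3 * g t) / (t : ℂ)^2)
      (𝓝[≠] (0 : ℝ)) (𝓝 0)) : α = 0 ∧ β = 0 := by
  have hne : ∀ᶠ t : ℝ in 𝓝[≠] (0 : ℝ), (t : ℂ) ≠ 0 := by
    filter_upwards [self_mem_nhdsWithin] with t ht
    exact_mod_cast ht
  have hα : α = 0 := by
    have h0 : Tendsto (fun t : ℝ => (t : ℂ)) (𝓝[≠] (0 : ℝ)) (𝓝 0) := by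
      have : Continuous (fun t : ℝ => (t : ℂ)) := by fun_prop
      simpa using (this.tendsto 0).mono_left nhdsWithin_le_nhds
    have h1 := h0.mul h
    have h2 : Tendsto (fun t : ℝ => α + (t : ℂ) * β + (t : ℂ)^2 * g t) (𝓝[≠] (0 : ℝ)) (𝓝 α) := by
      have : Continuous (fun t : ℝ => α + (t : ℂ) * β + (t : ℂ)^2 * g t) := by fun_prop
      simpa using (this.tendsto 0).mono_left nhdsWithin_le_nhds
    rw [mul_zero] at h1
    refine tendsto_nhds_unique (h2.congr' ?_) h1
    filter_upwards [hne] with t ht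
    field_simp
  refine ⟨hα, ?_⟩
  have h2 : Tendsto (fun t : ℝ => β + (t : ℂ) * g t) (𝓝[≠] (0 : ℝ)) (𝓝 β) := by
    have : Continuous (fun t : ℝ => β + (t : ℂ) * g t) := by fun_prop
    simpa using (this.tendsto 0).mono_left nhdsWithin_le_nhds
  refine tendsto_nhds_unique (h2.congr' ?_) h
  filter_upwards [hne] with t ht
  subst hα
  field_simp
  ring

theorem det_aux (e x00 x01 x10 x11 u02 x02 u12 x12 u20 x20 u21 x21 u22 x22 : ℂ)
    (H : ℝ → Matrix (Fin 3) (Fin 3) ℂ)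
    (h00 : ∀ t : ℝ, H t 0 0 = 1 + t * 0 + t^2 * x00)
    (h01 : ∀ t : ℝ, H t 0 1 = 0 + t * 0 + t^2 * x01)
    (h02 : ∀ t : ℝ, H t 0 2 = 0 + t * u02 + t^2 * x02)
    (h10 : ∀ t : ℝ, H t 1 0 = 0 + t * 0 + t^2 * x10)
    (h11 : ∀ t : ℝ, H t 1 1 = e + t * 0 + t^2 * x11)
    (h12 : ∀ t : ℝ, H t 1 2 = 0 + t * u12 + t^2 * x12)
    (h20 : ∀ t : ℝ, H t 2 0 = 0 + t * u20 + t^2 * x20)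
    (h21 : ∀ t : ℝ, H t 2 1 = 0 + t * u21 + t^2 * x21)
    (h22 : ∀ t : ℝ, H t 2 2 = t * u22 + t^2 * x22)
    (h : Tendsto (fun t : ℝ => (H t).det / (t : ℂ)^2) (𝓝[≠] (0 : ℝ)) (𝓝 0)) :
    e * u22 = 0 ∧ e * x22 - u12 * u21 - e * u02 * u20 = 0 := by
  refine lim_aux _ _ (fun t : ℝ => -(u12*x21+x12*u21+t*x12*x21) - e*(u02*x20+x02*u20+t*x02*x20)
    + x11*(u22+t*x22) + x00*((e+t^2*x11)*(u22+t*x22) - t*(u12+t*x12)*(u21+t*x21))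
    - x01*(t^2*x10*(u22+t*x22) - t*(u12+t*x12)*(u20+t*x20))
    + (t*x10*(u02+t*x02)*(u21+t*x21) - t*x11*(u02+t*x02)*(u20+t*x20))) (by fun_prop) ?_
  refine h.congr fun t => ?_
  rw [Matrix.det_fin_three, h00, h01, h02, h10, h11, h12, h20, h21, h22]
  congr 1
  ring

theorem re_aux (a : ℂ) (h1 : a + conj a = 0) (h2 : I * a - I * conj a = 0) : a = 0 := by
  have h3 : a - conj a = 0 := by
    have : I * (a - conj a) = 0 := by rw [mul_sub]; exact h2
    exact (mul_eq_zero.mp this).resolve_left I_ne_zero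
  linear_combination (h1 + h3) / 2

/-- Lemma 8 (diagonal cases): if every homogeneous Taylor component of degree ≤ 2 of the
determinant of the complex Hessian of `F` vanishes at `0`, then `A₁ = A₂ = B₁ = B₂ = B₃ = 0`
and `S(z, z̄) = 4 (k² |z₁|² + ε m² |z₂|²)`. -/
theorem stmt_1 (ε : ℝ) (hε : ε = 1 ∨ ε = -1) (k m : ℝ) (hk : 0 < k) (hm : 0 ≤ m)
    (A1 : Fin 2 → ℂ) (A2 : ℂ)
    (P Q : Fin 2 → Fin 2 → Fin 2 → ℂ) (R : Fin 2 → Fin 2 → ℂ)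
    (S : Matrix (Fin 2) (Fin 2) ℂ) (hS : S.conjTranspose = S)
    (T : Fin 2 → Fin 2 → Fin 2 → Fin 2 → ℂ)
    (hT : ∀ i j l o, conj (T i j l o) = T l o i j)
    (B1 : Fin 2 → Fin 2 → ℂ) (B2 B3 : Fin 2 → ℂ)
    (hdeg : ∀ p : Fin 3 → ℂ,
      Tendsto (fun t : ℝ =>
          (wirtHess (Fc ε k m A1 A2 P Q R S T B1 B2 B3) (t • p)).det / (t : ℂ) ^ 2)
        (𝓝[≠] (0 : ℝ)) (𝓝 0)) :
    (∀ z : Fin 2 → ℂ, ∑ i, A1 i * z i = 0) ∧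
    A2 = 0 ∧
    (∀ z : Fin 2 → ℂ, ∑ i, ∑ j, B1 i j * z i * z j = 0) ∧
    (∀ z : Fin 2 → ℂ, ∑ i, B2 i * z i = 0) ∧
    (∀ z : Fin 2 → ℂ, ∑ i, B3 i * z i = 0) ∧
    (∀ z : Fin 2 → ℂ, ∑ i, ∑ j, S i j * z i * conj (z j)
        = 4 * ((k : ℂ) ^ 2 * z 0 * conj (z 0) + (ε : ℂ) * (m : ℂ) ^ 2 * z 1 * conj (z 1))) := by
  have hε2 : (ε : ℂ) * ε = 1 := by rcases hε with h | h <;> simp [h]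
  have hε0 : (ε : ℂ) ≠ 0 := left_ne_zero_of_mul_eq_one hε2
  have key := fun p : Fin 3 → ℂ => det_aux ε _ _ _ _ _ _ _ _ _ _ _ _
    (A1 0 * p 0 + A1 1 * p 1 + conj (A1 0) * conj (p 0) + conj (A1 1) * conj (p 1) + 2*A2*p 2 + 2*conj A2*conj (p 2))
    ((S 0 0 * p 0 * conj (p 0) + S 0 1 * p 0 * conj (p 1) + S 1 0 * p 1 * conj (p 0) + S 1 1 * p 1 * conj (p 1)) + (B1 0 0 * p 0 * p 0 + (B1 0 1 + B1 1 0) * p 0 * p 1 + B1 1 1 * p 1 * p 1) + (conj (B1 0 0) * conj (p 0) * conj (p 0) + (conj (B1 0 1) + conj (B1 1 0)) * conj (p 0) * conj (p 1) + conj (B1 1 1) * conj (p 1) * conj (p 1)) + 2 * (B2 0 * p 0 + B2 1 * p 1) * p 2 + 2 * (conj (B2 0) * conj (p 0) + conj (B2 1) * conj (p 1)) * conj (p 2) + 2 * (B3 0 * p 0 + B3 1 * p 1) * conj (p 2) + 2 * (conj (B3 0) * conj (p 0) + conj (B3 1) * conj (p 1)) * p 2)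
    (fun t : ℝ => wirtHess (Fc ε k m A1 A2 P Q R S T B1 B2 B3) (t • p))
    (hess00 ε k m A1 A2 P Q R S T B1 B2 B3 p)
    (hess01 ε k m A1 A2 P Q R S T B1 B2 B3 p)
    (hess02 ε k m A1 A2 P Q R S T B1 B2 B3 p)
    (hess10 ε k m A1 A2 P Q R S T B1 B2 B3 p)
    (hess11 ε k m A1 A2 P Q R S T B1 B2 B3 p)
    (hess12 ε k m A1 A2 P Q R S T B1 B2 B3 p)
    (hess20 ε k m A1 A2 P Q R S T B1 B2 B3 p)
    (hess21 ε k m A1 A2 P Q R S T B1 B2 B3 p)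
    (fun t => by
      rw [hess22]
      simp only [Pi.smul_apply, Complex.real_smul, map_mul, Complex.conj_ofReal]
      ring) (hdeg p)
  have lin := fun p => (mul_eq_zero.mp (key p).1).resolve_left hε0
  have hA10 : A1 0 = 0 := by
    have h1 := lin ![1, 0, 0]
    have h2 := lin ![I, 0, 0]
    simp at h1 h2
    exact re_aux _ h1 (by linear_combination h2)
  have hA11 : A1 1 = 0 := by
    have h1 := lin ![0, 1, 0]
    have h2 := lin ![0, I, 0]
    simp at h1 h2
    exact re_aux _ h1 (by linear_combination h2)
  have hA2 : A2 = 0 := by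
    have h1 := lin ![0, 0, 1]
    have h2 := lin ![0, 0, I]
    simp at h1 h2
    exact re_aux _ (by linear_combination h1 / 2) (by linear_combination h2 / 2)
  -- the quadratic identity, in terms of `z` and `ζ`
  have quad : ∀ a b c : ℂ,
      (S 0 0 * a * conj a + S 0 1 * a * conj b + S 1 0 * b * conj a + S 1 1 * b * conj b)
      + (B1 0 0 * a * a + (B1 0 1 + B1 1 0) * a * b + B1 1 1 * b * b)
      + conj (B1 0 0 * a * a + (B1 0 1 + B1 1 0) * a * b + B1 1 1 * b * b)
      + 2 * (B2 0 * a + B2 1 * b) * c + 2 * conj (B2 0 * a + B2 1 * b) * conj c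
      + 2 * (B3 0 * a + B3 1 * b) * conj c + 2 * conj (B3 0 * a + B3 1 * b) * c
      = 4 * ((k : ℂ) ^ 2 * a * conj a + (ε : ℂ) * (m : ℂ) ^ 2 * b * conj b) := by
    intro a b c
    have h := (key ![a, b, c]).2
    simp [hA10, hA11] at h
    simp only [map_add, map_mul]
    linear_combination (ε : ℂ) * h + (4 * (k : ℂ) ^ 2 * a * conj a - ((S 0 0 * a * conj a + S 0 1 * a * conj b + S 1 0 * b * conj a + S 1 1 * b * conj b)
      + (B1 0 0 * a * a + (B1 0 1 + B1 1 0) * a * b + B1 1 1 * b * b)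
      + (conj (B1 0 0) * conj a * conj a + (conj (B1 0 1) + conj (B1 1 0)) * conj a * conj b + conj (B1 1 1) * conj b * conj b)
      + 2 * (B2 0 * a + B2 1 * b) * c + 2 * (conj (B2 0) * conj a + conj (B2 1) * conj b) * conj c
      + 2 * (B3 0 * a + B3 1 * b) * conj c + 2 * (conj (B3 0) * conj a + conj (B3 1) * conj b) * c)) * hε2
  have hB1re : ∀ a b : ℂ, (B1 0 0 * a * a + (B1 0 1 + B1 1 0) * a * b + B1 1 1 * b * b)
      + conj (B1 0 0 * a * a + (B1 0 1 + B1 1 0) * a * b + B1 1 1 * b * b) = 0 := by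
    intro a b
    have h1 := quad a b 0
    have h2 := quad (I * a) (I * b) 0
    simp only [map_add, map_mul, conj_I, map_zero] at h1 h2 ⊢
    ring_nf at h1 h2 ⊢
    simp only [I_sq] at h2
    linear_combination (h1 - h2) / 2
  have hB1 : ∀ a b : ℂ, B1 0 0 * a * a + (B1 0 1 + B1 1 0) * a * b + B1 1 1 * b * b = 0 := by
    intro a b
    refine re_aux _ (hB1re a b) ?_
    have h2 := hB1re ((1 + I) * a) ((1 + I) * b)
    simp only [map_add, map_mul, conj_I, map_one] at h2 ⊢
    linear_combination h2 / 2 - (B1 0 0 * a * a + (B1 0 1 + B1 1 0) * a * b + B1 1 1 * b * b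
      + (conj (B1 0 0) * conj a * conj a + (conj (B1 0 1) + conj (B1 1 0)) * conj a * conj b + conj (B1 1 1) * conj b * conj b)) / 2 * I_sq
  have hS' : ∀ a b : ℂ,
      S 0 0 * a * conj a + S 0 1 * a * conj b + S 1 0 * b * conj a + S 1 1 * b * conj b
      = 4 * ((k : ℂ) ^ 2 * a * conj a + (ε : ℂ) * (m : ℂ) ^ 2 * b * conj b) := by
    intro a b
    have h1 := quad a b 0
    rw [hB1] at h1
    simpa using h1
  have hB : ∀ a b c : ℂ, (B2 0 * a + B2 1 * b) * c + conj (B2 0 * a + B2 1 * b) * conj c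
      + (B3 0 * a + B3 1 * b) * conj c + conj (B3 0 * a + B3 1 * b) * c = 0 := by
    intro a b c
    have h1 := quad a b c
    rw [hB1, hS', map_zero] at h1
    linear_combination h1 / 2
  have hadd : ∀ a b : ℂ, (B2 0 * a + B2 1 * b) + (B3 0 * a + B3 1 * b) = 0 := by
    intro a b
    have h1 := hB a b 1
    have h2 := hB (I * a) (I * b) 1
    simp only [map_add, map_mul, conj_I, map_one] at h1 h2
    apply re_aux <;> simp only [map_add, map_mul]
    · linear_combination h1
    · linear_combination h2
  have hsub : ∀ a b : ℂ, (B2 0 * a + B2 1 * b) - (B3 0 * a + B3 1 * b) = 0 := by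
    intro a b
    have h1 := hB a b I
    have h2 := hB (I * a) (I * b) I
    simp only [map_add, map_mul, conj_I] at h1 h2
    apply re_aux <;> simp only [map_add, map_sub, map_mul]
    · linear_combination -h2 + (B2 0 * a + B2 1 * b - B3 0 * a - B3 1 * b + conj (B2 0) * conj a + conj (B2 1) * conj b - conj (B3 0) * conj a - conj (B3 1) * conj b) * I_sq
    · linear_combination h1
  simp only [Fin.sum_univ_two]
  refine ⟨fun z => by simp [hA10, hA11], hA2, fun z => ?_, fun z => ?_, fun z => ?_, fun z => ?_⟩
  · linear_combination hB1 (z 0) (z 1)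
  · linear_combination (hadd (z 0) (z 1) + hsub (z 0) (z 1)) / 2
  · linear_combination (hadd (z 0) (z 1) - hsub (z 0) (z 1)) / 2
  · linear_combination hS' (z 0) (z 1)
end

section
/- Let ⟨·,·⟩ be a nondegenerate Hermitian form on ℂ², let K and K̃ be complex quadratic forms on ℂ², and let Γ = {(z, ζ, w) ∈ ℂ²×ℂ×ℂ : Im w = ⟨z, z̄⟩ + 2Re(K(z,z)·conj(ζ)) + E(z, ζ, Re w)} and Γ̃ = {(z, ζ, w) : Im w = ⟨z, z̄⟩ + 2Re(K̃(z,z)·conj(ζ)) + Ẽ(z, ζ, Re w)}, where E, Ẽ are real-analytic real-valued functions near 0 of weighted order ≥ 4 (weights [z₁]=[z₂]=[ζ]=1, [u]=2, i.e. E(tz, tζ, t²u)/t³ → 0 as t → 0 for all fixed (z, ζ, u) near 0, and likewise for Ẽ). Let Φ = (f, g, h) (with f ℂ²-valued and g, h ℂ-valued) be holomorphic on a neighborhood U of 0 in ℂ⁴, with Φ(0) = 0, invertible derivative DΦ(0), and Φ(Γ ∩ U) ⊆ Γ̃. Then: ∂f/∂ζ(0) = 0; ∂h/∂z₁(0) =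 ∂h/∂z₂(0) = ∂h/∂ζ(0) = 0; all second-order partial derivatives of h at 0 with respect to the variables (z₁, z₂, ζ) vanish; ρ := ∂h/∂w(0) is a nonzero real number; the matrix C := ∂f/∂z(0) ∈ GL(2, ℂ); β := ∂g/∂ζ(0) ≠ 0; and for all z ∈ ℂ²: ⟨Cz, conj(Cz)⟩ = ρ·⟨z, z̄⟩ and K̃(Cz, Cz) = (ρ/conj(β))·K(z,z). -/
open ComplexConjugate Filter Topology

/-- Value of the Hermitian form with coefficient matrix `A` on `ℂ²`. -/
noncomputable def hermVal (A : Matrix (Fin 2) (Fin 2) ℂ) (z : Fin 2 → ℂ) : ℂ :=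
  ∑ i, ∑ j, A i j * z i * conj (z j)

/-- Value of the complex quadratic form `K(z,z) = k z₁² + l z₁ z₂ + m z₂²` on `ℂ²`. -/
def quadVal (k l m : ℂ) (z : Fin 2 → ℂ) : ℂ :=
  k * z 0 ^ 2 + l * z 0 * z 1 + m * z 1 ^ 2

/-- `E` has weighted order `≥ 4` at `0` for the weights `[z] = [ζ] = 1`, `[u] = 2`:
`E (t z, t ζ, t² u) / t³ → 0` as `t → 0`, for all `(z, ζ, u)` near `0`. -/
def wOrder4 (E : (Fin 2 → ℂ) × ℂ × ℝ → ℝ) : Prop :=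
  ∀ᶠ x : (Fin 2 → ℂ) × ℂ × ℝ in 𝓝 0,
    Tendsto (fun t : ℝ => E (t • x.1, t • x.2.1, t ^ 2 * x.2.2) / t ^ 3)
      (𝓝[≠] (0 : ℝ)) (𝓝 0)

/-- The hypersurface `Im w = ⟨z, z̄⟩ + 2 Re (K(z,z) ζ̄) + E (z, ζ, Re w)` in `ℂ⁴`,
coordinates `p = (z₁, z₂, ζ, w)`. -/
noncomputable def hyp (A : Matrix (Fin 2) (Fin 2) ℂ) (k l m : ℂ)
    (E : (Fin 2 → ℂ) × ℂ × ℝ → ℝ) : Set (Fin 4 → ℂ) :=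
  {p | (p 3).im = (hermVal A ![p 0, p 1]).re
        + 2 * (quadVal k l m ![p 0, p 1] * conj (p 2)).re
        + E (![p 0, p 1], p 2, (p 3).re)}

/-- The `j`-th complex partial derivative (at every point) of a function on `ℂ⁴`. -/
noncomputable def pd (j : Fin 4) (φ : (Fin 4 → ℂ) → ℂ) : (Fin 4 → ℂ) → ℂ :=
  fun p => fderiv ℂ φ p (Pi.single j 1)

/-- holomorphic near the origin -/
def Hol (φ : (Fin 4 → ℂ) → ℂ) : Prop := ∀ᶠ p in 𝓝 (0 : Fin 4 → ℂ), DifferentiableAt ℂ φ p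

lemma line_deriv {φ : (Fin 4 → ℂ) → ℂ} {q w : Fin 4 → ℂ} {c : ℂ}
    (h : DifferentiableAt ℂ φ (q + c • w)) :
    HasDerivAt (fun c : ℂ => φ (q + c • w)) (fderiv ℂ φ (q + c • w) w) c := by
  have h1 : HasDerivAt (fun c : ℂ => q + c • w) w c := by
    simpa using ((hasDerivAt_id c).smul_const w).const_add q
  exact h.hasFDerivAt.comp_hasDerivAt c h1

lemma fderiv_bound {φ : (Fin 4 → ℂ) → ℂ} {R M : ℝ} (hR : 0 < R)
    (hd : ∀ p ∈ Metric.ball (0 : Fin 4 → ℂ) R, DifferentiableAt ℂ φ p)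
    (hb : ∀ p ∈ Metric.ball (0 : Fin 4 → ℂ) R, ‖φ p‖ ≤ M)
    {q : Fin 4 → ℂ} (hq : ‖q‖ < R / 2) : ‖fderiv ℂ φ q‖ ≤ M / (R / 2) := by
  have hM : 0 ≤ M := (norm_nonneg _).trans (hb 0 (by simpa using hR))
  refine ContinuousLinearMap.opNorm_le_bound _ (by positivity) fun w => ?_
  by_cases hw : w = 0
  · simp [hw]
  have hw' : 0 < ‖w‖ := norm_pos_iff.2 hw
  have hin : ∀ c ∈ Metric.closedBall (0 : ℂ) (R / 2 / ‖w‖), q + c • w ∈ Metric.ball (0 : Fin 4 → ℂ) R := by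
    intro c hc
    rw [mem_closedBall_zero_iff] at hc
    rw [mem_ball_zero_iff]
    have h1 : ‖c • w‖ ≤ R / 2 := by
      rw [norm_smul]
      rwa [le_div_iff₀ hw'] at hc
    linarith [norm_add_le q (c • w)]
  have hdd : ∀ c ∈ Metric.closedBall (0 : ℂ) (R / 2 / ‖w‖), HasDerivAt (fun c : ℂ => φ (q + c • w)) (fderiv ℂ φ (q + c • w) w) c :=
    fun c hc => line_deriv (hd _ (hin c hc))
  have h2 := Complex.norm_deriv_le_of_forall_mem_sphere_norm_le (c := 0) (R := R / 2 / ‖w‖) (C := M)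
    (f := fun c : ℂ => φ (q + c • w)) (by positivity)
    (DifferentiableOn.diffContOnCl_ball (U := Metric.closedBall (0 : ℂ) (R / 2 / ‖w‖))
      (fun c hc => (hdd c hc).differentiableAt.differentiableWithinAt) subset_rfl)
    (fun c hc => hb _ (hin c (Metric.sphere_subset_closedBall hc)))
  rw [(hdd 0 (by simp; positivity)).deriv] at h2
  simp only [zero_smul, add_zero] at h2
  calc _ ≤ _ := h2
    _ = _ := by field_simp

lemma Hol.exists_ball {φ : (Fin 4 → ℂ) → ℂ} (h : Hol φ) : ∃ R > 0, ∃ M : ℝ,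
    (∀ p ∈ Metric.ball (0 : Fin 4 → ℂ) R, DifferentiableAt ℂ φ p) ∧
    (∀ p ∈ Metric.ball (0 : Fin 4 → ℂ) R, ‖φ p‖ ≤ M) := by
  have hc : ContinuousAt φ 0 := h.self_of_nhds.continuousAt
  have h2 : ∀ᶠ p in 𝓝 (0 : Fin 4 → ℂ), ‖φ p‖ < ‖φ 0‖ + 1 :=
    hc.norm.eventually_lt continuousAt_const (by simp)
  obtain ⟨R, hR, hb⟩ := Metric.eventually_nhds_iff_ball.1 (h.and h2)
  exact ⟨R, hR, _, fun p hp => (hb p hp).1, fun p hp => (hb p hp).2.le⟩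

lemma Hol.pd_hol {φ : (Fin 4 → ℂ) → ℂ} (h : Hol φ) (j : Fin 4) : Hol (pd j φ) := by
  obtain ⟨R, hR, M, hd, hb⟩ := h.exists_ball
  have hM : 0 ≤ M := (norm_nonneg _).trans (hb 0 (by simpa using hR))
  set v : Fin 4 → ℂ := Pi.single j 1 with hv
  have hv1 : ‖v‖ = 1 := by rw [hv, Pi.norm_single]; simp
  set r : ℝ := R / 4 with hr
  have hr0 : 0 < r := by positivity
  have hin : ∀ p ∈ Metric.ball (0 : Fin 4 → ℂ) r, ∀ c ∈ Metric.closedBall (0 : ℂ) r,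
      ‖p + c • v‖ < R / 2 := by
    intro p hp c hc
    rw [mem_closedBall_zero_iff] at hc
    rw [mem_ball_zero_iff] at hp
    have h1 : ‖c • v‖ ≤ r := by rw [norm_smul, hv1]; linarith
    linarith [norm_add_le p (c • v)]
  have hin' : ∀ p ∈ Metric.ball (0 : Fin 4 → ℂ) r, ∀ c ∈ Metric.closedBall (0 : ℂ) r,
      p + c • v ∈ Metric.ball (0 : Fin 4 → ℂ) R := by
    intro p hp c hc
    rw [mem_ball_zero_iff]; linarith [hin p hp c hc]
  have hcm : ∀ θ, circleMap 0 r θ ∈ Metric.closedBall (0 : ℂ) r := fun θ =>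
    circleMap_mem_closedBall _ hr0.le _
  have key : ∀ p ∈ Metric.ball (0 : Fin 4 → ℂ) r, pd j φ p =
      (2 * Real.pi * Complex.I : ℂ)⁻¹ • ∫ θ in (0:ℝ)..2 * Real.pi,
        (deriv (circleMap 0 r) θ * (circleMap 0 r θ) ^ (-2 : ℤ)) * φ (p + circleMap 0 r θ • v) := by
    intro p hp
    have hdd : ∀ c ∈ Metric.closedBall (0 : ℂ) r, HasDerivAt (fun c : ℂ => φ (p + c • v))
      (fderiv ℂ φ (p + c • v) v) c := fun c hc => line_deriv (hd _ (hin' p hp c hc))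
    have h2 := DiffContOnCl.deriv_eq_smul_circleIntegral (c := 0) (R := r)
      (f := fun c : ℂ => φ (p + c • v)) hr0
      (DifferentiableOn.diffContOnCl_ball (U := Metric.closedBall (0 : ℂ) r)
      (fun c hc => (hdd c hc).differentiableAt.differentiableWithinAt) subset_rfl)
    rw [(hdd 0 (by simp; positivity)).deriv] at h2
    simp only [zero_smul, add_zero] at h2
    have h3 : (∫ θ in (0:ℝ)..2 * Real.pi,
        (deriv (circleMap 0 r) θ * (circleMap 0 r θ) ^ (-2 : ℤ)) * φ (p + circleMap 0 r θ • v)) =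
        ∮ z in C(0, r), (1 / (z - 0) ^ 2) • φ (p + z • v) := by
      rw [circleIntegral]
      congr 1
      ext θ
      have : (-2 : ℤ) = -((2 : ℕ) : ℤ) := by norm_num
      rw [this, zpow_neg, zpow_natCast]
      simp only [smul_eq_mul, sub_zero, one_div]
      ring
    rw [pd, h3, h2, inv_smul_smul₀ Complex.two_pi_I_ne_zero]
  set a : ℝ → ℂ := fun θ => deriv (circleMap 0 r) θ * (circleMap 0 r θ) ^ (-2 : ℤ) with ha
  have hac : Continuous a := by
    simp only [ha, deriv_circleMap]
    refine ((continuous_circleMap 0 r).mul continuous_const).mul ?_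
    exact (continuous_circleMap 0 r).zpow₀ _ (fun θ => Or.inl (circleMap_ne_center hr0.ne'))
  have hmem : Metric.ball (0 : Fin 4 → ℂ) r ∈ 𝓝 (0 : Fin 4 → ℂ) := Metric.ball_mem_nhds _ hr0
  filter_upwards [hmem] with p hp
  have hpn : Metric.ball (0 : Fin 4 → ℂ) r ∈ 𝓝 p := Metric.isOpen_ball.mem_nhds hp
  have hphi : ∀ q ∈ Metric.ball (0 : Fin 4 → ℂ) r, Continuous fun θ => φ (q + circleMap 0 r θ • v) := by
    intro q hq
    rw [continuous_iff_continuousAt]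
    intro θ
    have := (hd _ (hin' q hq _ (hcm θ))).continuousAt
    exact ContinuousAt.comp (f := fun θ => q + circleMap 0 r θ • v) this
      (by fun_prop)
  have hmeas : Measurable fun θ => fderiv ℂ φ (p + circleMap 0 r θ • v) :=
    (measurable_fderiv ℂ φ).comp (by fun_prop)
  have hder := intervalIntegral.hasFDerivAt_integral_of_dominated_of_fderiv_le (μ := MeasureTheory.volume)
    (𝕜 := ℂ) (a := 0) (b := 2 * Real.pi) (s := Metric.ball (0 : Fin 4 → ℂ) r) (x₀ := p)
    (F := fun q θ => a θ * φ (q + circleMap 0 r θ • v))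
    (F' := fun q θ => a θ • fderiv ℂ φ (q + circleMap 0 r θ • v))
    (bound := fun θ => ‖a θ‖ * (M / (R / 2))) hpn
    (by
      filter_upwards [hpn] with q hq
      exact (hac.mul (hphi q hq)).aestronglyMeasurable)
    ((hac.mul (hphi p hp)).intervalIntegrable _ _)
    (by
      refine MeasureTheory.AEStronglyMeasurable.smul hac.aestronglyMeasurable ?_
      exact hmeas.aestronglyMeasurable)
    (by
      refine Eventually.of_forall fun θ _ q hq => ?_
      rw [norm_smul]
      exact mul_le_mul_of_nonneg_left (fderiv_bound hR hd hb (hin q hq _ (hcm θ))) (norm_nonneg _))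
    ((hac.norm.mul continuous_const).intervalIntegrable _ _)
    (by
      refine Eventually.of_forall fun θ _ q hq => ?_
      have := (hd _ (hin' q hq _ (hcm θ))).hasFDerivAt
      have h3 : HasFDerivAt (fun q => φ (q + circleMap 0 r θ • v)) (fderiv ℂ φ (q + circleMap 0 r θ • v)) q := by
        exact this.comp q ((hasFDerivAt_id q).add_const (circleMap 0 r θ • v))
      exact h3.const_mul (a θ))
  have h4 := (hder.const_smul ((2 * Real.pi * Complex.I : ℂ)⁻¹)).differentiableAt
  refine h4.congr_of_eventuallyEq ?_
  filter_upwards [hpn] with q hq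
  exact key q hq

/-- homogeneous Taylor components at the origin -/
noncomputable def tc : ℕ → ((Fin 4 → ℂ) → ℂ) → (Fin 4 → ℂ) → ℂ
  | 0, φ, _ => φ 0
  | k + 1, φ, p => ((k : ℂ) + 1)⁻¹ * ∑ j, p j * tc k (pd j φ) p

lemma tc_smul (k : ℕ) : ∀ (φ : (Fin 4 → ℂ) → ℂ) (t : ℂ) (p : Fin 4 → ℂ),
    tc k φ (t • p) = t ^ k * tc k φ p := by
  induction k with
  | zero => intro φ t p; simp [tc]
  | succ k ih =>
    intro φ t p
    simp only [tc, ih, Pi.smul_apply, smul_eq_mul, Finset.mul_sum]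
    refine Finset.sum_congr rfl fun j _ => ?_
    ring

lemma fderiv_eq_sum (φ : (Fin 4 → ℂ) → ℂ) (q p : Fin 4 → ℂ) :
    fderiv ℂ φ q p = ∑ j, p j * pd j φ q := by
  conv_lhs => rw [pi_eq_sum_univ' p]
  rw [map_sum]
  refine Finset.sum_congr rfl fun j _ => ?_
  rw [map_smul, smul_eq_mul, pd]

lemma taylor (n : ℕ) : ∀ φ : (Fin 4 → ℂ) → ℂ, Hol φ →
    ∃ C : ℝ, ∀ᶠ p in 𝓝 (0 : Fin 4 → ℂ),
      ‖φ p - ∑ k ∈ Finset.range (n + 1), tc k φ p‖ ≤ C * ‖p‖ ^ (n + 1) := by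
  induction n with
  | zero =>
    intro φ h
    obtain ⟨C, hC⟩ := h.self_of_nhds.isBigO_sub.bound
    exact ⟨C, by simpa [tc] using hC⟩
  | succ n ih =>
    intro φ h
    choose C hC using fun j => ih (pd j φ) (h.pd_hol j)
    obtain ⟨δ, hδ, hb⟩ := Metric.eventually_nhds_iff_ball.1 (h.and (eventually_all.2 hC))
    refine ⟨∑ j, |C j|, ?_⟩
    filter_upwards [Metric.ball_mem_nhds (0 : Fin 4 → ℂ) hδ] with p hp
    rw [mem_ball_zero_iff] at hp
    have hin : ∀ t ∈ Set.Icc (0:ℝ) 1, ‖((t : ℂ) • p)‖ ≤ ‖p‖ := by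
      intro t ht
      rw [norm_smul, Complex.norm_real, Real.norm_eq_abs, abs_of_nonneg ht.1]
      exact mul_le_of_le_one_left (norm_nonneg _) ht.2
    set g : ℝ → ℂ := fun t => φ ((t : ℂ) • p) - ∑ k ∈ Finset.range (n + 2), (t : ℂ) ^ k * tc k φ p with hg
    set g' : ℝ → ℂ := fun t => ∑ j, p j * (pd j φ ((t : ℂ) • p) -
        ∑ k ∈ Finset.range (n + 1), tc k (pd j φ) ((t : ℂ) • p)) with hg'
    have hder : ∀ t ∈ Set.Icc (0:ℝ) 1, HasDerivWithinAt g (g' t) (Set.Icc 0 1) t := by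
      intro t ht
      have hd := (hb ((t : ℂ) • p) (by rw [mem_ball_zero_iff]; linarith [hin t ht])).1
      have h1 := line_deriv (φ := φ) (q := 0) (w := p) (c := (t : ℂ)) (by simpa using hd)
      simp only [zero_add] at h1
      have h2 : HasDerivAt (fun c : ℂ => ∑ k ∈ Finset.range (n + 2), c ^ k * tc k φ p)
          (∑ k ∈ Finset.range (n + 2), ((k : ℂ) * (t : ℂ) ^ (k - 1)) * tc k φ p) (t : ℂ) := by
        refine HasDerivAt.fun_sum fun k _ => ?_
        exact (hasDerivAt_pow k (t : ℂ)).mul_const _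
      have h3 := (h1.sub h2).comp_ofReal
      refine (h3.congr_deriv ?_).hasDerivWithinAt
      rw [fderiv_eq_sum, Finset.sum_range_succ']
      simp only [hg', Nat.cast_zero, zero_mul, add_zero, Nat.add_sub_cancel, mul_sub,
        Finset.sum_sub_distrib]
      congr 1
      simp only [Finset.mul_sum]
      rw [Finset.sum_comm]
      refine Finset.sum_congr rfl fun k _ => ?_
      simp only [tc, tc_smul, Finset.mul_sum]
      refine Finset.sum_congr rfl fun j _ => ?_
      have : (k : ℂ) + 1 ≠ 0 := by exact_mod_cast Nat.succ_ne_zero k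
      push_cast
      field_simp
    have hbd : ∀ t ∈ Set.Ico (0:ℝ) 1, ‖g' t‖ ≤ (∑ j, |C j|) * ‖p‖ ^ (n + 2) := by
      intro t ht
      have ht' : t ∈ Set.Icc (0:ℝ) 1 := Set.Ico_subset_Icc_self ht
      have hd := (hb ((t : ℂ) • p) (by rw [mem_ball_zero_iff]; linarith [hin t ht'])).2
      rw [Finset.sum_mul]
      refine norm_sum_le_of_le _ fun j _ => ?_
      rw [norm_mul]
      calc ‖p j‖ * _ ≤ ‖p‖ * (|C j| * ‖p‖ ^ (n + 1)) := by
            refine mul_le_mul (norm_le_pi_norm p j) ?_ (norm_nonneg _) (norm_nonneg _)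
            refine (hd j).trans ?_
            refine mul_le_mul (le_abs_self _) ?_ (by positivity) (by positivity)
            exact pow_le_pow_left₀ (norm_nonneg _) (hin t ht') _
        _ = _ := by ring
    have := norm_image_sub_le_of_norm_deriv_le_segment_01' hder hbd
    have e1 : g 1 - g 0 = φ p - ∑ k ∈ Finset.range (n + 1 + 1), tc k φ p := by
      simp only [hg, Complex.ofReal_one, one_smul, one_pow, one_mul, Complex.ofReal_zero, zero_smul]
      have : ∑ k ∈ Finset.range (n + 2), (0:ℂ) ^ k * tc k φ p = φ 0 := by
        rw [Finset.sum_range_succ']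
        simp [tc]
      rw [this]; ring
    rw [e1] at this
    exact this

lemma pd_symm {φ : (Fin 4 → ℂ) → ℂ} (h : Hol φ) (i j : Fin 4) :
    pd i (pd j φ) 0 = pd j (pd i φ) 0 := by
  have hd : DifferentiableAt ℂ (fderiv ℂ φ) 0 := by
    have e : fderiv ℂ φ = fun q => ∑ j, pd j φ q •
        (ContinuousLinearMap.proj j : (Fin 4 → ℂ) →L[ℂ] ℂ) := by
      ext q p
      rw [fderiv_eq_sum]
      simp [mul_comm]
    rw [e]
    refine DifferentiableAt.fun_sum fun j _ => ?_
    exact ((h.pd_hol j).self_of_nhds).smul_const _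
  have hs := second_derivative_symmetric_of_eventually (𝕜 := ℂ) (f := φ) (f' := fderiv ℂ φ) (x := 0)
    (h.mono fun p hp => hp.hasFDerivAt) hd.hasFDerivAt
  have e : ∀ i j, pd i (pd j φ) 0 = fderiv ℂ (fderiv ℂ φ) 0 (Pi.single i 1) (Pi.single j 1) := by
    intro i j
    have h1 : HasFDerivAt (pd j φ) ((ContinuousLinearMap.apply ℂ ℂ (Pi.single j 1)).comp
        (fderiv ℂ (fderiv ℂ φ) 0)) 0 :=
      (ContinuousLinearMap.apply ℂ ℂ (Pi.single j 1 : Fin 4 → ℂ)).hasFDerivAt.comp 0 hd.hasFDerivAt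
    rw [pd, h1.fderiv]
    rfl
  rw [e, e, hs]

lemma order_bound {Y : Type*} [NormedAddCommGroup Y] [NormedSpace ℝ Y] (n : ℕ) :
    ∀ H : ℝ × Y → ℝ, AnalyticAt ℝ H 0 →
    (∀ᶠ y in 𝓝 (0 : Y), (n : ℕ∞) ≤ analyticOrderAt (fun t : ℝ => H (t, y)) 0) →
    ∃ C : ℝ, ∀ᶠ q in 𝓝 (0 : ℝ × Y), |H q| ≤ C * |q.1| ^ n := by
  induction n with
  | zero =>
    intro H hH _
    have : ∀ᶠ q in 𝓝 (0 : ℝ × Y), |H q| < |H 0| + 1 :=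
      hH.continuousAt.abs.eventually_lt continuousAt_const (by simp)
    exact ⟨|H 0| + 1, this.mono fun q hq => by simpa using hq.le⟩
  | succ n ih =>
    intro H hH ho
    set D : ℝ × Y → ℝ := fun q => fderiv ℝ H q (1, 0) with hD
    have hline : ∀ q : ℝ × Y, DifferentiableAt ℝ H q → HasDerivAt (fun t => H (t, q.2)) (D q) q.1 := by
      intro q hq
      have h1 : HasDerivAt (fun t : ℝ => ((t, q.2) : ℝ × Y)) (1, 0) q.1 :=
        (hasDerivAt_id q.1).prodMk (hasDerivAt_const q.1 q.2)
      exact HasFDerivAt.comp_hasDerivAt (f := fun t : ℝ => ((t, q.2) : ℝ × Y)) q.1 hq.hasFDerivAt h1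
    have hDa : AnalyticAt ℝ D 0 :=
      ((ContinuousLinearMap.apply ℝ ℝ ((1, 0) : ℝ × Y)).analyticAt _).comp hH.fderiv
    have hcont : Tendsto (fun y : Y => ((0 : ℝ), y)) (𝓝 0) (𝓝 (0 : ℝ × Y)) := by
      have : Continuous (fun y : Y => ((0 : ℝ), y)) := by fun_prop
      exact this.tendsto 0
    have han := hcont.eventually hH.eventually_analyticAt
    have hzero : ∀ᶠ y in 𝓝 (0 : Y), H (0, y) = 0 := by
      filter_upwards [ho] with y hy
      by_contra hne
      have := analyticOrderAt_ne_zero (f := fun t : ℝ => H (t, y)) (z₀ := 0)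
      have h1 : analyticOrderAt (fun t : ℝ => H (t, y)) 0 ≠ 0 := by
        intro h0
        rw [h0] at hy
        simp at hy
      exact hne (this.1 h1).2
    have hoD : ∀ᶠ y in 𝓝 (0 : Y), (n : ℕ∞) ≤ analyticOrderAt (fun t : ℝ => D (t, y)) 0 := by
      filter_upwards [ho, hzero, han] with y h1 h2 h3
      have h4 : AnalyticAt ℝ (fun t : ℝ => H (t, y)) 0 :=
        AnalyticAt.fun_comp (f := fun t : ℝ => (t, y)) h3 (by fun_prop)
      have h5 := h4.analyticOrderAt_deriv_add_one
      simp only [h2, sub_zero] at h5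
      have h6 : (deriv fun t : ℝ => H (t, y)) =ᶠ[𝓝 0] fun t => D (t, y) := by
        have hc2 : Tendsto (fun t : ℝ => (t, y)) (𝓝 0) (𝓝 ((0 : ℝ), y)) := by
          have : Continuous (fun t : ℝ => (t, y)) := by fun_prop
          exact this.tendsto 0
        filter_upwards [hc2.eventually h3.eventually_analyticAt] with t ht
        exact (hline (t, y) ht.differentiableAt).deriv
      rw [analyticOrderAt_congr h6] at h5
      rw [← h5] at h1
      push_cast at h1
      exact (ENat.add_le_add_iff_right (by simp)).1 h1
    obtain ⟨C, hC⟩ := ih D hDa hoD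
    have hzero' : ∀ᶠ q in 𝓝 (0 : ℝ × Y), H (0, q.2) = 0 :=
      (continuous_snd.tendsto (0 : ℝ × Y)).eventually hzero
    obtain ⟨δ, hδ, hb⟩ := Metric.eventually_nhds_iff_ball.1
      ((hC.and hH.eventually_analyticAt).and hzero')
    refine ⟨|C|, ?_⟩
    filter_upwards [Metric.ball_mem_nhds (0 : ℝ × Y) hδ] with q hq
    have hin : ∀ s ∈ Metric.closedBall (0 : ℝ) |q.1|, (s, q.2) ∈ Metric.ball (0 : ℝ × Y) δ := by
      intro s hs
      rw [mem_closedBall_zero_iff] at hs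
      rw [mem_ball_zero_iff] at hq ⊢
      refine lt_of_le_of_lt ?_ hq
      rw [Prod.norm_def, Prod.norm_def]
      exact max_le_max (by simpa using hs) le_rfl
    have hmv := (convex_closedBall (0 : ℝ) |q.1|).norm_image_sub_le_of_norm_hasDerivWithin_le
      (f := fun t => H (t, q.2)) (f' := fun t => D (t, q.2)) (C := |C| * |q.1| ^ n) (x := 0) (y := q.1)
      (fun s hs => (hline (s, q.2) (hb _ (hin s hs)).1.2.differentiableAt).hasDerivWithinAt)
      (fun s hs => by
        have h1 := (hb _ (hin s hs)).1.1
        rw [mem_closedBall_zero_iff] at hs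
        rw [Real.norm_eq_abs]
        refine h1.trans ?_
        exact mul_le_mul (le_abs_self _) (pow_le_pow_left₀ (abs_nonneg _) (by simpa using hs) _)
          (by positivity) (by positivity))
      (by simp) (by simp)
    have hz := (hb q hq).2
    simp only [hz, sub_zero, Real.norm_eq_abs] at hmv
    calc _ ≤ _ := hmv
      _ = _ := by ring

lemma order_of_tendsto {f : ℝ → ℝ} (hf : AnalyticAt ℝ f 0)
    (h : Tendsto (fun t => f t / t ^ 3) (𝓝[≠] (0:ℝ)) (𝓝 0)) : ((4 : ℕ) : ℕ∞) ≤ analyticOrderAt f 0 := by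
  by_contra hlt
  rw [not_le] at hlt
  obtain ⟨m, hm⟩ := ENat.ne_top_iff_exists.1 hlt.ne_top
  rw [← hm] at hlt
  have hm4 : m < 4 := by exact_mod_cast hlt
  obtain ⟨g, hg, hg0, hfg⟩ := (hf.analyticOrderAt_eq_natCast).1 hm.symm
  have h1 : Tendsto g (𝓝[≠] (0:ℝ)) (𝓝 (g 0)) := hg.continuousAt.tendsto.mono_left nhdsWithin_le_nhds
  have h2 : Tendsto (fun t : ℝ => t ^ (3 - m)) (𝓝[≠] (0:ℝ)) (𝓝 ((0:ℝ) ^ (3 - m))) :=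
    ((continuous_pow (3 - m)).tendsto 0).mono_left nhdsWithin_le_nhds
  have h3 := h.mul h2
  rw [zero_mul] at h3
  have h4 : Tendsto g (𝓝[≠] (0:ℝ)) (𝓝 0) := by
    refine h3.congr' ?_
    filter_upwards [hfg.filter_mono nhdsWithin_le_nhds, self_mem_nhdsWithin] with t ht ht0
    have ht0' : t ≠ 0 := ht0
    rw [ht]
    simp only [sub_zero, smul_eq_mul]
    have : t ^ 3 = t ^ m * t ^ (3 - m) := by rw [← pow_add]; congr 1; omega
    rw [this]
    field_simp
  exact hg0 (tendsto_nhds_unique h1 h4)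

lemma wbound {E : (Fin 2 → ℂ) × ℂ × ℝ → ℝ} (hE : AnalyticAt ℝ E 0) (h4 : wOrder4 E) :
    ∃ C δ : ℝ, 0 < δ ∧ 0 ≤ C ∧ ∀ (τ : ℝ) (z : Fin 2 → ℂ) (ζ : ℂ) (u : ℝ), 0 ≤ τ → τ < δ →
      ‖z‖ ≤ τ → ‖ζ‖ ≤ τ → |u| ≤ τ ^ 2 → |E (z, ζ, u)| ≤ C * τ ^ 4 := by
  set H : ℝ × ((Fin 2 → ℂ) × ℂ × ℝ) → ℝ :=
    fun q => E (q.1 • q.2.1, q.1 • q.2.2.1, q.1 ^ 2 * q.2.2.2) with hH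
  have hpoly : ∀ q, AnalyticAt ℝ (fun q : ℝ × ((Fin 2 → ℂ) × ℂ × ℝ) =>
      (q.1 • q.2.1, q.1 • q.2.2.1, q.1 ^ 2 * q.2.2.2)) q := by
    intro q
    have h1 : AnalyticAt ℝ (fun q : ℝ × ((Fin 2 → ℂ) × ℂ × ℝ) => q.1) q := analyticAt_fst
    have h2 : AnalyticAt ℝ (fun q : ℝ × ((Fin 2 → ℂ) × ℂ × ℝ) => q.2) q := analyticAt_snd
    have h3 : AnalyticAt ℝ (fun q : ℝ × ((Fin 2 → ℂ) × ℂ × ℝ) => q.2.1) q := analyticAt_fst.fun_comp h2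
    have h4 : AnalyticAt ℝ (fun q : ℝ × ((Fin 2 → ℂ) × ℂ × ℝ) => q.2.2) q := analyticAt_snd.fun_comp h2
    have h5 : AnalyticAt ℝ (fun q : ℝ × ((Fin 2 → ℂ) × ℂ × ℝ) => q.2.2.1) q := analyticAt_fst.fun_comp h4
    have h6 : AnalyticAt ℝ (fun q : ℝ × ((Fin 2 → ℂ) × ℂ × ℝ) => q.2.2.2) q := analyticAt_snd.fun_comp h4
    exact (h1.smul h3).prod ((h1.smul h5).prod ((h1.pow 2).mul h6))
  have hHa : ∀ y, AnalyticAt ℝ H (0, y) := by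
    intro y
    refine AnalyticAt.fun_comp (g := E) ?_ (hpoly (0, y))
    convert hE using 1
    ext <;> simp
  obtain ⟨C, hC⟩ := order_bound 4 H (hHa 0) (by
    filter_upwards [h4] with y hy
    refine order_of_tendsto ?_ hy
    exact AnalyticAt.fun_comp (f := fun t : ℝ => (t, y)) (hHa y) (by fun_prop))
  obtain ⟨δ, hδ, hb⟩ := Metric.eventually_nhds_iff_ball.1 hC
  set d : ℝ := min δ 1 / 2 with hd
  have hd0 : 0 < d := by positivity
  have hd1 : d < 1 := by have := min_le_right δ 1; rw [hd]; linarith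
  have hdδ : d < δ := by
    have := min_le_left δ 1
    have h2 : 0 < min δ 1 := by positivity
    rw [hd]; linarith
  refine ⟨|C| / d ^ 4, δ * d, by positivity, by positivity, ?_⟩
  intro τ z ζ u hτ0 hτ hz hζ hu
  rcases hτ0.eq_or_lt with h0 | hτp
  · subst h0
    have hz' : z = 0 := by simpa using hz
    have hζ' : ζ = 0 := by simpa using hζ
    have hu' : u = 0 := by simpa using hu
    have := hb 0 (by simpa using hδ)
    subst hz' hζ' hu'
    simpa [hH] using this
  · set t := τ / d with ht
    have ht0 : 0 < t := by positivity
    have hq := hb (t, (t⁻¹ • z, t⁻¹ • ζ, (t ^ 2)⁻¹ * u)) (by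
      rw [mem_ball_zero_iff]
      simp only [Prod.norm_def, norm_smul, norm_mul, Real.norm_eq_abs]
      have e1 : |t| < δ := by
        rw [abs_of_pos ht0, ht, div_lt_iff₀ hd0]; exact hτ
      have e2 : ∀ x : ℝ, x ≤ τ → |t⁻¹| * x < δ := by
        intro x hx
        refine lt_of_le_of_lt ?_ hdδ
        rw [abs_of_pos (by positivity), inv_mul_le_iff₀ ht0, ht]
        field_simp
        exact hx
      have e3 : |(t ^ 2)⁻¹| * |u| < δ := by
        refine lt_of_le_of_lt ?_ hdδ
        rw [abs_of_pos (by positivity), inv_mul_le_iff₀ (by positivity), ht]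
        refine hu.trans ?_
        field_simp
        nlinarith
      exact max_lt e1 (max_lt (e2 _ hz) (max_lt (e2 _ hζ) e3)))
    simp only [hH] at hq
    rw [smul_inv_smul₀ ht0.ne', smul_inv_smul₀ ht0.ne', mul_inv_cancel_left₀ (by positivity)] at hq
    refine hq.trans ?_
    rw [abs_of_pos ht0, ht, div_pow]
    have : C ≤ |C| := le_abs_self C
    calc C * (τ ^ 4 / d ^ 4) ≤ |C| * (τ ^ 4 / d ^ 4) := mul_le_mul_of_nonneg_right this (by positivity)
      _ = _ := by ring

open Asymptotics

/-- `φ = O(t^k)` as the real parameter tends to zero. -/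
def BO (k : ℕ) (φ : ℝ → ℂ) : Prop := φ =O[𝓝 (0 : ℝ)] fun t : ℝ => t ^ k

lemma BO.add {k : ℕ} {φ ψ : ℝ → ℂ} (h : BO k φ) (h' : BO k ψ) : BO k (fun t => φ t + ψ t) :=
  IsBigO.add h h'

lemma BO.sub {k : ℕ} {φ ψ : ℝ → ℂ} (h : BO k φ) (h' : BO k ψ) : BO k (fun t => φ t - ψ t) :=
  IsBigO.sub h h'

lemma BO.const_mul {k : ℕ} {φ : ℝ → ℂ} (h : BO k φ) (c : ℂ) : BO k (fun t => c * φ t) :=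
  IsBigO.const_mul_left h c

lemma BO.mul {k l : ℕ} {φ ψ : ℝ → ℂ} (h : BO k φ) (h' : BO l ψ) :
    BO (k + l) (fun t => φ t * ψ t) := by
  have := IsBigO.mul h h'
  simpa only [BO, pow_add] using this

lemma BO.mono {k l : ℕ} {φ : ℝ → ℂ} (h : BO k φ) (hl : l ≤ k) : BO l φ := by
  refine IsBigO.trans h ?_
  refine IsBigO.of_bound 1 ?_
  filter_upwards [Metric.closedBall_mem_nhds (0 : ℝ) one_pos] with t ht
  rw [mem_closedBall_zero_iff] at ht
  rw [norm_pow, norm_pow, one_mul]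
  exact pow_le_pow_of_le_one (norm_nonneg _) ht hl

lemma BO.conj {k : ℕ} {φ : ℝ → ℂ} (h : BO k φ) : BO k (fun t => conj (φ t)) := by
  refine IsBigO.trans ?_ h
  exact IsBigO.of_bound 1 (Eventually.of_forall fun t => by simp)

lemma BO_pow (k : ℕ) (c : ℂ) : BO k (fun t => (t : ℂ) ^ k * c) := by
  refine IsBigO.of_bound ‖c‖ (Eventually.of_forall fun t => ?_)
  rw [norm_mul, norm_pow, Complex.norm_real, norm_pow, mul_comm]

lemma BO.congr {k : ℕ} {φ ψ : ℝ → ℂ} (h : BO k φ) (e : ∀ t, φ t = ψ t) : BO k ψ := by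
  have : φ = ψ := funext e
  rwa [← this]

noncomputable def e3 : Fin 4 → ℂ := Pi.single 3 1

noncomputable def L1 (φ : (Fin 4 → ℂ) → ℂ) (x : Fin 4 → ℂ) : ℂ := ∑ j, x j * pd j φ 0

noncomputable def B2 (b : Fin 4 → Fin 4 → ℂ) (x y : Fin 4 → ℂ) : ℂ :=
  ∑ j, ∑ k, x j * y k * b j k

noncomputable def B3 (c : Fin 4 → Fin 4 → Fin 4 → ℂ) (x y z : Fin 4 → ℂ) : ℂ :=
  ∑ j, ∑ k, ∑ l, x j * y k * z l * c j k l

noncomputable def hess (φ : (Fin 4 → ℂ) → ℂ) : Fin 4 → Fin 4 → ℂ :=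
  fun j k => 2⁻¹ * pd k (pd j φ) 0

lemma L1_comb (φ : (Fin 4 → ℂ) → ℂ) (α β : ℂ) (x y : Fin 4 → ℂ) :
    L1 φ (α • x + β • y) = α * L1 φ x + β * L1 φ y := by
  simp only [L1, Finset.mul_sum, ← Finset.sum_add_distrib]
  refine Finset.sum_congr rfl fun j _ => ?_
  simp only [Pi.add_apply, Pi.smul_apply, smul_eq_mul]
  ring

lemma B2_comb (b : Fin 4 → Fin 4 → ℂ) (α β : ℂ) (x y : Fin 4 → ℂ) :
    B2 b (α • x + β • y) (α • x + β • y) =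
      α ^ 2 * B2 b x x + α * β * (B2 b x y + B2 b y x) + β ^ 2 * B2 b y y := by
  simp only [B2, Finset.mul_sum, ← Finset.sum_add_distrib]
  refine Finset.sum_congr rfl fun j _ => Finset.sum_congr rfl fun k _ => ?_
  simp only [Pi.add_apply, Pi.smul_apply, smul_eq_mul]
  ring

lemma B2_comb_left (b : Fin 4 → Fin 4 → ℂ) (α β : ℂ) (x y z : Fin 4 → ℂ) :
    B2 b (α • x + β • y) z = α * B2 b x z + β * B2 b y z := by
  simp only [B2, Finset.mul_sum, ← Finset.sum_add_distrib]
  refine Finset.sum_congr rfl fun j _ => Finset.sum_congr rfl fun k _ => ?_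
  simp only [Pi.add_apply, Pi.smul_apply, smul_eq_mul]
  ring

lemma B2_comb_right (b : Fin 4 → Fin 4 → ℂ) (α β : ℂ) (x y z : Fin 4 → ℂ) :
    B2 b z (α • x + β • y) = α * B2 b z x + β * B2 b z y := by
  simp only [B2, Finset.mul_sum, ← Finset.sum_add_distrib]
  refine Finset.sum_congr rfl fun j _ => Finset.sum_congr rfl fun k _ => ?_
  simp only [Pi.add_apply, Pi.smul_apply, smul_eq_mul]
  ring

lemma B3_comb (c : Fin 4 → Fin 4 → Fin 4 → ℂ) (α β : ℂ) (x y : Fin 4 → ℂ) :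
    B3 c (α • x + β • y) (α • x + β • y) (α • x + β • y) =
      α ^ 3 * B3 c x x x + α ^ 2 * β * (B3 c x x y + B3 c x y x + B3 c y x x)
      + α * β ^ 2 * (B3 c x y y + B3 c y x y + B3 c y y x) + β ^ 3 * B3 c y y y := by
  simp only [B3, Finset.mul_sum, ← Finset.sum_add_distrib]
  refine Finset.sum_congr rfl fun j _ => Finset.sum_congr rfl fun k _ =>
    Finset.sum_congr rfl fun l _ => ?_
  simp only [Pi.add_apply, Pi.smul_apply, smul_eq_mul]
  ring

lemma taylor3 {φ : (Fin 4 → ℂ) → ℂ} (h : Hol φ) (h0 : φ 0 = 0) :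
    ∃ (c : Fin 4 → Fin 4 → Fin 4 → ℂ) (C : ℝ), ∀ᶠ p in 𝓝 (0 : Fin 4 → ℂ),
      ‖φ p - (L1 φ p + B2 (hess φ) p p + B3 c p p p)‖ ≤ C * ‖p‖ ^ 4 := by
  obtain ⟨C, hC⟩ := taylor 3 φ h
  refine ⟨fun j k l => 6⁻¹ * pd l (pd k (pd j φ)) 0, C, ?_⟩
  filter_upwards [hC] with p hp
  convert hp using 3
  simp only [Finset.sum_range_succ, Finset.sum_range_zero, tc, h0, L1, B2, B3, hess]
  simp only [Finset.mul_sum]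
  norm_num
  congr 1
  · congr 1
    refine Finset.sum_congr rfl fun j _ => Finset.sum_congr rfl fun k _ => ?_
    ring
  · refine Finset.sum_congr rfl fun j _ => Finset.sum_congr rfl fun k _ =>
      Finset.sum_congr rfl fun l _ => ?_
    ring

lemma tendsto_curve (v : Fin 4 → ℂ) {s : ℝ → ℂ} (hs : BO 2 s) :
    (fun t : ℝ => (t : ℂ) • v + s t • e3) =O[𝓝 (0:ℝ)] fun t : ℝ => t := by
  refine IsBigO.add ?_ ?_
  · refine IsBigO.of_bound ‖v‖ (Eventually.of_forall fun t => ?_)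
    rw [norm_smul, Complex.norm_real, mul_comm]
  · have h1 := hs.mono (l := 1) (by norm_num)
    simp only [BO, pow_one] at h1
    refine IsBigO.trans ?_ h1
    refine IsBigO.of_bound ‖e3‖ (Eventually.of_forall fun t => ?_)
    rw [norm_smul, mul_comm]

lemma BO_of_expand {c d : ℂ} {s : ℝ → ℂ}
    (hs : BO 4 fun t => s t - ((t : ℂ) ^ 2 * c + (t : ℂ) ^ 3 * d)) :
    BO 2 s ∧ BO 3 (fun t => s t - (t : ℂ) ^ 2 * c) := by
  have h3 : BO 3 (fun t => s t - (t : ℂ) ^ 2 * c) :=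
    ((hs.mono (l := 3) (by norm_num)).add (BO_pow 3 d)).congr fun t => by ring
  exact ⟨((h3.mono (l := 2) (by norm_num)).add (BO_pow 2 c)).congr fun t => by ring, h3⟩

lemma expand {φ : (Fin 4 → ℂ) → ℂ} (h : Hol φ) (h0 : φ 0 = 0) :
    ∃ (c3 : Fin 4 → Fin 4 → Fin 4 → ℂ), ∀ (v : Fin 4 → ℂ) (c d : ℂ) (s : ℝ → ℂ),
      (BO 4 fun t => s t - ((t : ℂ) ^ 2 * c + (t : ℂ) ^ 3 * d)) →
      BO 4 fun t : ℝ => φ ((t : ℂ) • v + s t • e3) -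
        ((t : ℂ) * L1 φ v + (t : ℂ) ^ 2 * (c * L1 φ e3 + B2 (hess φ) v v)
        + (t : ℂ) ^ 3 * (d * L1 φ e3 + c * (B2 (hess φ) v e3 + B2 (hess φ) e3 v)
          + B3 c3 v v v)) := by
  obtain ⟨c3, C, hC⟩ := taylor3 h h0
  refine ⟨c3, fun v c d s hs => ?_⟩
  obtain ⟨hs2, hs3⟩ := BO_of_expand hs
  have hX := tendsto_curve v hs2
  have hX0 : Tendsto (fun t : ℝ => (t : ℂ) • v + s t • e3) (𝓝 0) (𝓝 0) :=
    hX.trans_tendsto tendsto_id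
  have hR : BO 4 fun t : ℝ => φ ((t : ℂ) • v + s t • e3) -
      (L1 φ ((t : ℂ) • v + s t • e3) + B2 (hess φ) ((t : ℂ) • v + s t • e3) ((t : ℂ) • v + s t • e3)
      + B3 c3 ((t : ℂ) • v + s t • e3) ((t : ℂ) • v + s t • e3) ((t : ℂ) • v + s t • e3)) := by
    refine IsBigO.trans ?_ (hX.norm_left.pow 4)
    refine IsBigO.of_bound C ?_
    filter_upwards [hX0.eventually hC] with t ht
    simpa using ht
  have ht1 : BO 1 (fun t => (t : ℂ)) := (BO_pow 1 1).congr fun t => by simp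
  have r1 := hs.const_mul (L1 φ e3)
  have r2 := (ht1.mul hs3).const_mul (B2 (hess φ) v e3 + B2 (hess φ) e3 v)
  have r3 := (hs2.mul hs2).const_mul (B2 (hess φ) e3 e3)
  have r4 := ((ht1.mul ht1).mul hs2).const_mul (B3 c3 v v e3 + B3 c3 v e3 v + B3 c3 e3 v v)
  have r5 := ((ht1.mul (hs2.mul hs2)).mono (l := 4) (by norm_num)).const_mul
    (B3 c3 v e3 e3 + B3 c3 e3 v e3 + B3 c3 e3 e3 v)
  have r6 := ((hs2.mul (hs2.mul hs2)).mono (l := 4) (by norm_num)).const_mul (B3 c3 e3 e3 e3)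
  refine ((((((hR.add r1).add r2).add r3).add r4).add r5).add r6).congr fun t => ?_
  rw [L1_comb, B2_comb, B3_comb]
  ring

lemma Et_bound {E : (Fin 2 → ℂ) × ℂ × ℝ → ℝ} (hE : AnalyticAt ℝ E 0) (h4 : wOrder4 E)
    {τ : ℝ → ℝ} (hτ0 : ∀ t, 0 ≤ τ t) (hτ : Tendsto τ (𝓝 0) (𝓝 0)) {F1 F2 G : ℝ → ℂ} {u : ℝ → ℝ}
    (h1 : F1 =O[𝓝 0] τ) (h2 : F2 =O[𝓝 0] τ) (hG : G =O[𝓝 0] τ) (hu : u =O[𝓝 0] fun t => τ t ^ 2) :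
    (fun t => ((E (![F1 t, F2 t], G t, u t) : ℝ) : ℂ)) =O[𝓝 0] fun t => τ t ^ 4 := by
  obtain ⟨C, δ, hδ, hC0, hC⟩ := wbound hE h4
  obtain ⟨K1, hK1⟩ := h1.bound
  obtain ⟨K2, hK2⟩ := h2.bound
  obtain ⟨K3, hK3⟩ := hG.bound
  obtain ⟨K4, hK4⟩ := hu.bound
  set K := |K1| + |K2| + |K3| + |K4| + 1 with hK
  have k1 := abs_nonneg K1
  have k2 := abs_nonneg K2
  have k3 := abs_nonneg K3
  have k4 := abs_nonneg K4
  have l1 := le_abs_self K1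
  have l2 := le_abs_self K2
  have l3 := le_abs_self K3
  have l4 := le_abs_self K4
  have hKτ : Tendsto (fun t => K * τ t) (𝓝 0) (𝓝 0) := by simpa using hτ.const_mul K
  refine IsBigO.of_bound (C * K ^ 4) ?_
  filter_upwards [hK1, hK2, hK3, hK4, hKτ.eventually_lt_const hδ] with t m1 m2 m3 m4 m5
  have hτt := hτ0 t
  rw [Real.norm_of_nonneg hτt] at m1 m2 m3
  replace m4 : |u t| ≤ K4 * τ t ^ 2 := by simpa [abs_of_nonneg hτt] using m4
  have hb := hC (K * τ t) ![F1 t, F2 t] (G t) (u t) (by positivity) m5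
    (by
      rw [pi_norm_le_iff_of_nonneg (by positivity)]
      intro i
      fin_cases i
      · exact m1.trans (mul_le_mul_of_nonneg_right (by linarith) hτt)
      · exact m2.trans (mul_le_mul_of_nonneg_right (by linarith) hτt))
    (m3.trans (mul_le_mul_of_nonneg_right (by linarith) hτt))
    (m4.trans (by
      rw [mul_pow]
      refine mul_le_mul_of_nonneg_right ?_ (by positivity)
      nlinarith))
  rw [Complex.norm_real, Real.norm_eq_abs, Real.norm_of_nonneg (by positivity)]
  refine hb.trans (le_of_eq (by ring))

lemma BO_coeff {k : ℕ} {α : ℂ} (h : BO (k + 1) fun t => (t : ℂ) ^ k * α) : α = 0 := by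
  obtain ⟨C, hC⟩ := IsBigO.bound h
  have h1 : ∀ᶠ t : ℝ in 𝓝[≠] 0, ‖α‖ ≤ C * |t| := by
    filter_upwards [hC.filter_mono nhdsWithin_le_nhds, self_mem_nhdsWithin] with t ht ht0
    have ht0' : 0 < |t| := abs_pos.2 ht0
    rw [norm_mul, norm_pow, Complex.norm_real, norm_pow, Real.norm_eq_abs, pow_succ] at ht
    have hp : 0 < |t| ^ k := by positivity
    by_contra hcon
    rw [not_le] at hcon
    nlinarith
  have h2 : Tendsto (fun t : ℝ => C * |t|) (𝓝[≠] 0) (𝓝 0) := by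
    have : Continuous fun t : ℝ => C * |t| := by fun_prop
    have := this.tendsto 0
    simp only [abs_zero, mul_zero] at this
    exact this.mono_left nhdsWithin_le_nhds
  have h3 : ‖α‖ ≤ 0 := ge_of_tendsto h2 h1
  simpa using h3

lemma BO.re {k : ℕ} {φ : ℝ → ℂ} (h : BO k φ) : BO k (fun t => ((φ t).re : ℂ)) := by
  refine IsBigO.trans ?_ h
  refine IsBigO.of_bound 1 (Eventually.of_forall fun t => ?_)
  rw [Complex.norm_real, one_mul]
  exact Complex.abs_re_le_norm _

lemma BO.congr' {k : ℕ} {φ ψ : ℝ → ℂ} (h : BO k φ) (e : ∀ᶠ t in 𝓝 (0 : ℝ), φ t = ψ t) : BO k ψ :=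
  IsBigO.congr' h e (EventuallyEq.refl _ _)

lemma ext1 {Ψ : ℝ → ℂ} {κ : ℂ} (h : BO 2 fun t => Ψ t - (t : ℂ) * κ)
    (h0 : ∀ᶠ t in 𝓝 (0 : ℝ), (Ψ t).re = 0) : κ.re = 0 := by
  have h1 : BO (1 + 1) fun t => (t : ℂ) ^ 1 * ((-κ.re : ℝ) : ℂ) := by
    refine h.re.congr' ?_
    filter_upwards [h0] with t ht
    simp [ht]
  have := BO_coeff h1
  simpa using this

lemma ext3 {Ψ : ℝ → ℂ} {κ κ' : ℂ} (h : BO 4 fun t => Ψ t - ((t : ℂ) ^ 2 * κ + (t : ℂ) ^ 3 * κ'))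
    (h0 : ∀ᶠ t in 𝓝 (0 : ℝ), (Ψ t).re = 0) : κ.re = 0 ∧ κ'.re = 0 := by
  have hr : BO 4 fun t => (t : ℂ) ^ 2 * ((-κ.re : ℝ) : ℂ) + (t : ℂ) ^ 3 * ((-κ'.re : ℝ) : ℂ) := by
    refine h.re.congr' ?_
    filter_upwards [h0] with t ht
    have e2 : ((t : ℂ) ^ 2 * κ).re = t ^ 2 * κ.re := by
      rw [← Complex.ofReal_pow, Complex.re_ofReal_mul]
    have e3 : ((t : ℂ) ^ 3 * κ').re = t ^ 3 * κ'.re := by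
      rw [← Complex.ofReal_pow, Complex.re_ofReal_mul]
    rw [Complex.sub_re, Complex.add_re, e2, e3, ht]
    push_cast
    ring
  have h2 : κ.re = 0 := by
    have : BO (2 + 1) fun t => (t : ℂ) ^ 2 * ((-κ.re : ℝ) : ℂ) :=
      ((hr.mono (l := 3) (by norm_num)).sub (BO_pow 3 ((-κ'.re : ℝ) : ℂ))).congr fun t => by ring
    simpa using BO_coeff this
  refine ⟨h2, ?_⟩
  have : BO (3 + 1) fun t => (t : ℂ) ^ 3 * ((-κ'.re : ℝ) : ℂ) := by
    refine hr.congr fun t => ?_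
    rw [h2]
    simp
  simpa using BO_coeff this

lemma prod_conj {F F' : ℝ → ℂ} {a b a' b' : ℂ}
    (h : BO 3 fun t => F t - ((t : ℂ) * a + (t : ℂ) ^ 2 * b))
    (h' : BO 3 fun t => F' t - ((t : ℂ) * a' + (t : ℂ) ^ 2 * b')) :
    BO 4 fun t => F t * conj (F' t) - ((t : ℂ) ^ 2 * (a * conj a')
      + (t : ℂ) ^ 3 * (a * conj b' + b * conj a')) := by
  have p1 : BO 1 fun t => (t : ℂ) * a' + (t : ℂ) ^ 2 * b' :=
    (((BO_pow 1 a').congr fun t => by rw [pow_one]).add ((BO_pow 2 b').mono (by norm_num)))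
  have p2 : BO 1 fun t => (t : ℂ) * a + (t : ℂ) ^ 2 * b :=
    (((BO_pow 1 a).congr fun t => by rw [pow_one]).add ((BO_pow 2 b).mono (by norm_num)))
  have q1 := h.mul p1.conj
  have q2 := p2.mul h'.conj
  have q3 := (h.mul h'.conj).mono (l := 4) (by norm_num)
  refine (((q1.add q2).add q3).add (BO_pow 4 (b * conj b'))).congr fun t => ?_
  simp only [map_sub, map_add, map_mul, map_pow, Complex.conj_ofReal]
  ring

lemma BO_one_of {F : ℝ → ℂ} {a : ℂ} (h : BO 2 fun t => F t - (t : ℂ) * a) : BO 1 F :=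
  ((h.mono (l := 1) (by norm_num)).add (BO_pow 1 a)).congr fun t => by ring

lemma BO_two_of {F : ℝ → ℂ} {a b : ℂ} (h : BO 3 fun t => F t - ((t : ℂ) * a + (t : ℂ) ^ 2 * b)) :
    BO 2 fun t => F t - (t : ℂ) * a :=
  ((h.mono (l := 2) (by norm_num)).add (BO_pow 2 b)).congr fun t => by ring

lemma BO_three_of {F : ℝ → ℂ} {a b c : ℂ}
    (h : BO 4 fun t => F t - ((t : ℂ) * a + (t : ℂ) ^ 2 * b + (t : ℂ) ^ 3 * c)) :
    BO 3 fun t => F t - ((t : ℂ) * a + (t : ℂ) ^ 2 * b) :=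
  ((h.mono (l := 3) (by norm_num)).add (BO_pow 3 c)).congr fun t => by ring

lemma prod_three {F F' G : ℝ → ℂ} {a a' b : ℂ} (h : BO 2 fun t => F t - (t : ℂ) * a)
    (h' : BO 2 fun t => F' t - (t : ℂ) * a') (hG : BO 2 fun t => G t - (t : ℂ) * b) :
    BO 4 fun t => F t * F' t * conj (G t) - (t : ℂ) ^ 3 * (a * a' * conj b) := by
  have ht : ∀ x : ℂ, BO 1 fun t => (t : ℂ) * x := fun x => (BO_pow 1 x).congr fun t => by rw [pow_one]
  have q1 := (h.mul (BO_one_of h')).mul (BO_one_of hG).conj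
  have q2 := ((ht a).mul h').mul (BO_one_of hG).conj
  have q3 := ((ht a).mul (ht a')).mul hG.conj
  refine ((q1.add q2).add q3).congr fun t => ?_
  simp only [map_sub, map_mul, Complex.conj_ofReal]
  ring

/-- the mixed second order term of the Hermitian form -/
noncomputable def cross (A : Matrix (Fin 2) (Fin 2) ℂ) (a a' : Fin 2 → ℂ) : ℂ :=
  ∑ i, ∑ j, A i j * (a i * conj (a' j) + a' i * conj (a j))

lemma BO_herm (A : Matrix (Fin 2) (Fin 2) ℂ) {F : Fin 2 → ℝ → ℂ} {a a' : Fin 2 → ℂ}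
    (h : ∀ i, BO 3 fun t => F i t - ((t : ℂ) * a i + (t : ℂ) ^ 2 * a' i)) :
    BO 4 fun t => hermVal A (fun i => F i t) - ((t : ℂ) ^ 2 * hermVal A a + (t : ℂ) ^ 3 * cross A a a') := by
  have q := fun i j => (prod_conj (h i) (h j)).const_mul (A i j)
  refine ((((q 0 0).add (q 0 1)).add (q 1 0)).add (q 1 1)).congr fun t => ?_
  simp only [hermVal, cross, Fin.sum_univ_two]
  ring

lemma BO_quad (k l m : ℂ) {F : Fin 2 → ℝ → ℂ} {G : ℝ → ℂ} {a : Fin 2 → ℂ} {b : ℂ}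
    (h : ∀ i, BO 2 fun t => F i t - (t : ℂ) * a i) (hG : BO 2 fun t => G t - (t : ℂ) * b) :
    BO 4 fun t => quadVal k l m (fun i => F i t) * conj (G t)
      - (t : ℂ) ^ 3 * (quadVal k l m a * conj b) := by
  have q := fun i j => prod_three (h i) (h j) hG
  refine ((((q 0 0).const_mul k).add ((q 0 1).const_mul l)).add ((q 1 1).const_mul m)).congr
    fun t => ?_
  simp only [quadVal]
  ring

lemma BO.isBigO_abs {k : ℕ} {φ : ℝ → ℂ} (h : BO k φ) : φ =O[𝓝 (0:ℝ)] fun t => |t| ^ k := by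
  refine IsBigO.trans h (IsBigO.of_bound 1 (Eventually.of_forall fun t => ?_))
  simp

lemma jets_core (A : Matrix (Fin 2) (Fin 2) ℂ) (k l m : ℂ) {Et : (Fin 2 → ℂ) × ℂ × ℝ → ℝ}
    (hEt : AnalyticAt ℝ Et 0) (hEt4 : wOrder4 Et) {F : Fin 2 → ℝ → ℂ} {G H : ℝ → ℂ}
    {a a' : Fin 2 → ℂ} {b k1 k2 k3 : ℂ}
    (hF : ∀ i, BO 3 fun t => F i t - ((t : ℂ) * a i + (t : ℂ) ^ 2 * a' i))
    (hG : BO 2 fun t => G t - (t : ℂ) * b)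
    (hH : BO 4 fun t => H t - ((t : ℂ) * k1 + (t : ℂ) ^ 2 * k2 + (t : ℂ) ^ 3 * k3))
    (heq : ∀ᶠ t in 𝓝 (0 : ℝ), (H t).im = (hermVal A ![F 0 t, F 1 t]).re
        + 2 * (quadVal k l m ![F 0 t, F 1 t] * conj (G t)).re
        + Et (![F 0 t, F 1 t], G t, (H t).re)) :
    k1.im = 0 ∧ (k1 = 0 → k2.im = (hermVal A a).re ∧
      k3.im = (cross A a a').re + 2 * (quadVal k l m a * conj b).re) := by
  have hvec : ∀ t, ![F 0 t, F 1 t] = fun i => F i t := by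
    intro t; ext i; fin_cases i <;> rfl
  have hH3 := BO_three_of hH
  have hH2 := BO_two_of hH3
  have hF2 := fun i => BO_two_of (hF i)
  have hF1 := fun i => BO_one_of (hF2 i)
  have hG1 := BO_one_of hG
  have qh := BO_herm A hF
  have qq := BO_quad k l m hF2 hG
  set Ψ : ℝ → ℂ := fun t => -Complex.I * H t - hermVal A (fun i => F i t)
    - 2 * (quadVal k l m (fun i => F i t) * conj (G t))
    - ((Et (![F 0 t, F 1 t], G t, (H t).re) : ℝ) : ℂ) with hΨ
  have hΨ0 : ∀ᶠ t in 𝓝 (0 : ℝ), (Ψ t).re = 0 := by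
    filter_upwards [heq] with t ht
    rw [hvec] at ht
    simp only [hΨ, Complex.sub_re, Complex.ofReal_re, hvec]
    have e1 : (-Complex.I * H t).re = (H t).im := by simp
    have e2 : (2 * (quadVal k l m (fun i => F i t) * conj (G t))).re =
      2 * (quadVal k l m (fun i => F i t) * conj (G t)).re := by
      rw [show (2 : ℂ) = ((2 : ℝ) : ℂ) by norm_num, Complex.re_ofReal_mul]
    rw [e1, e2, ht]
    ring
  have habs : Tendsto (fun t : ℝ => |t|) (𝓝 0) (𝓝 0) := by
    simpa using (continuous_abs.tendsto (0 : ℝ))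
  have hsq : Tendsto (fun t : ℝ => √|t|) (𝓝 0) (𝓝 0) := by
    have : Continuous fun t : ℝ => √|t| := by fun_prop
    simpa using this.tendsto 0
  have hsqrt : ∀ φ : ℝ → ℂ, BO 1 φ → φ =O[𝓝 (0:ℝ)] fun t => √|t| := by
    intro φ hφ
    refine hφ.isBigO_abs.trans (IsBigO.of_bound 1 ?_)
    filter_upwards [Metric.closedBall_mem_nhds (0 : ℝ) one_pos] with t ht
    rw [mem_closedBall_zero_iff, Real.norm_eq_abs] at ht
    rw [pow_one, one_mul, Real.norm_of_nonneg (abs_nonneg t), Real.norm_of_nonneg (Real.sqrt_nonneg _)]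
    refine Real.le_sqrt_of_sq_le ?_
    nlinarith [abs_nonneg t]
  have hre : ∀ n, BO n H → (fun t => (H t).re) =O[𝓝 (0:ℝ)] fun t => |t| ^ n := by
    intro n hn
    refine IsBigO.trans ?_ hn.isBigO_abs
    refine IsBigO.of_bound 1 (Eventually.of_forall fun t => ?_)
    rw [one_mul]
    exact Complex.abs_re_le_norm _
  have key1 : k1.im = 0 := by
    have hE2 : BO 2 fun t => ((Et (![F 0 t, F 1 t], G t, (H t).re) : ℝ) : ℂ) := by
      have := Et_bound hEt hEt4 (τ := fun t => √|t|) (fun t => Real.sqrt_nonneg _) hsq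
        (hsqrt _ (hF1 0)) (hsqrt _ (hF1 1)) (hsqrt _ hG1)
        (u := fun t => (H t).re) (by
          have := hre 1 (BO_one_of hH2)
          refine this.congr_right fun t => ?_
          rw [pow_one, Real.sq_sqrt (abs_nonneg _)])
      refine this.congr_right fun t => ?_
      have e : √|t| ^ 4 = (√|t| ^ 2) ^ 2 := by ring
      rw [e, Real.sq_sqrt (abs_nonneg _), sq_abs]
    have h1 : BO 2 fun t => Ψ t - (t : ℂ) * (-Complex.I * k1) := by
      have r1 := hH2.const_mul (-Complex.I)
      have r2 := (qh.mono (l := 2) (by norm_num)).add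
        ((BO_pow 2 (hermVal A a)).add ((BO_pow 3 (cross A a a')).mono (by norm_num)))
      have r3 := ((qq.mono (l := 2) (by norm_num)).add
        ((BO_pow 3 (quadVal k l m a * conj b)).mono (by norm_num))).const_mul 2
      refine (((r1.sub r2).sub r3).sub hE2).congr fun t => ?_
      simp only [hΨ]
      ring
    have := ext1 h1 hΨ0
    simpa using this
  refine ⟨key1, fun hk1 => ?_⟩
  have hE4 : BO 4 fun t => ((Et (![F 0 t, F 1 t], G t, (H t).re) : ℝ) : ℂ) := by
    have := Et_bound hEt hEt4 (τ := fun t => |t|) (fun t => abs_nonneg _) habs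
      ((hF1 0).isBigO_abs.congr_right fun t => pow_one _)
      ((hF1 1).isBigO_abs.congr_right fun t => pow_one _)
      (hG1.isBigO_abs.congr_right fun t => pow_one _)
      (u := fun t => (H t).re) (hre 2 (by
        refine hH2.congr fun t => ?_
        rw [hk1]; ring))
    refine this.trans (IsBigO.of_bound 1 (Eventually.of_forall fun t => ?_))
    simp
  have h3 : BO 4 fun t => Ψ t - ((t : ℂ) ^ 2 * (-Complex.I * k2 - hermVal A a)
      + (t : ℂ) ^ 3 * (-Complex.I * k3 - cross A a a' - 2 * (quadVal k l m a * conj b))) := by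
    have r1 := hH.const_mul (-Complex.I)
    refine (((r1.sub qh).sub (qq.const_mul 2)).sub hE4).congr fun t => ?_
    simp only [hΨ, hk1]
    ring
  obtain ⟨g2, g3⟩ := ext3 h3 hΨ0
  have e2 : (2 * (quadVal k l m a * conj b)).re = 2 * (quadVal k l m a * conj b).re := by
    rw [show (2 : ℂ) = ((2 : ℝ) : ℂ) by norm_num, Complex.re_ofReal_mul]
  rw [Complex.sub_re, Complex.sub_re, e2] at g3
  rw [Complex.sub_re] at g2
  have e1 : ∀ x : ℂ, (-Complex.I * x).re = x.im := fun x => by simp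
  rw [e1] at g2 g3
  constructor <;> linarith

lemma jets (A : Matrix (Fin 2) (Fin 2) ℂ) (kK lK mK kT lT mT : ℂ)
    (E Et : (Fin 2 → ℂ) × ℂ × ℝ → ℝ)
    (hE : AnalyticAt ℝ E 0) (hEt : AnalyticAt ℝ Et 0)
    (hE4 : wOrder4 E) (hEt4 : wOrder4 Et)
    (f1 f2 g h : (Fin 4 → ℂ) → ℂ) (U : Set (Fin 4 → ℂ)) (hU : U ∈ 𝓝 (0 : Fin 4 → ℂ))
    (hf1 : Hol f1) (hf2 : Hol f2) (hg : Hol g) (hh : Hol h)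
    (h0 : f1 0 = 0 ∧ f2 0 = 0 ∧ g 0 = 0 ∧ h 0 = 0)
    (hmap : ∀ p ∈ hyp A kK lK mK E ∩ U, ![f1 p, f2 p, g p, h p] ∈ hyp A kT lT mT Et) :
    ∃ c3 : Fin 4 → Fin 4 → Fin 4 → ℂ, ∀ (z : Fin 2 → ℂ) (ζ : ℂ) (u : ℝ) (v : Fin 4 → ℂ) (c d : ℂ),
      v = ![z 0, z 1, ζ, 0] →
      c = (u : ℂ) + Complex.I * ((hermVal A z).re : ℂ) →
      d = Complex.I * ((2 * (quadVal kK lK mK z * conj ζ).re : ℝ) : ℂ) →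
      (L1 h v).im = 0 ∧ (L1 h v = 0 →
        (c * L1 h e3 + B2 (hess h) v v).im = (hermVal A ![L1 f1 v, L1 f2 v]).re ∧
        (d * L1 h e3 + c * (B2 (hess h) v e3 + B2 (hess h) e3 v) + B3 c3 v v v).im =
          (cross A ![L1 f1 v, L1 f2 v] ![c * L1 f1 e3 + B2 (hess f1) v v,
            c * L1 f2 e3 + B2 (hess f2) v v]).re +
          2 * (quadVal kT lT mT ![L1 f1 v, L1 f2 v] * conj (L1 g v)).re) := by
  obtain ⟨cf1, xf1⟩ := expand hf1 h0.1
  obtain ⟨cf2, xf2⟩ := expand hf2 h0.2.1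
  obtain ⟨cg, xg⟩ := expand hg h0.2.2.1
  obtain ⟨c3, xh⟩ := expand hh h0.2.2.2
  refine ⟨c3, fun z ζ u v c d hv hc hd => ?_⟩
  set N := (hermVal A z).re with hN
  set M := 2 * (quadVal kK lK mK z * conj ζ).re with hM
  set e : ℝ → ℝ := fun t => E (![(t : ℂ) * z 0, (t : ℂ) * z 1], (t : ℂ) * ζ, t ^ 2 * u) with he
  set s : ℝ → ℂ := fun t => ((t ^ 2 * u : ℝ) : ℂ)
    + Complex.I * ((t ^ 2 * N + t ^ 3 * M + e t : ℝ) : ℂ) with hs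
  have hlin : ∀ x : ℂ, (fun t : ℝ => (t : ℂ) * x) =O[𝓝 (0:ℝ)] fun t => |t| := fun x =>
    IsBigO.of_bound ‖x‖ (Eventually.of_forall fun t => by
      rw [norm_mul, Complex.norm_real, mul_comm, Real.norm_eq_abs, Real.norm_eq_abs, abs_abs])
  have heO : BO 4 fun t => ((e t : ℝ) : ℂ) := by
    have := Et_bound hE hE4 (τ := fun t => |t|) (fun t => abs_nonneg _)
      (by simpa using (continuous_abs.tendsto (0 : ℝ)))
      (hlin (z 0)) (hlin (z 1)) (hlin ζ) (u := fun t => t ^ 2 * u)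
      (IsBigO.of_bound |u| (Eventually.of_forall fun t => by simp [mul_comm]))
    refine this.trans (IsBigO.of_bound 1 (Eventually.of_forall fun t => ?_))
    simp
  have hsO : BO 4 fun t => s t - ((t : ℂ) ^ 2 * c + (t : ℂ) ^ 3 * d) := by
    refine (heO.const_mul Complex.I).congr fun t => ?_
    simp only [hs, hc, hd]
    push_cast
    ring
  have hX0 : Tendsto (fun t : ℝ => (t : ℂ) • v + s t • e3) (𝓝 0) (𝓝 0) :=
    (tendsto_curve v (BO_of_expand hsO).1).trans_tendsto tendsto_id
  have hX : ∀ t : ℝ, (t : ℂ) • v + s t • e3 = ![(t : ℂ) * z 0, (t : ℂ) * z 1, (t : ℂ) * ζ, s t] := by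
    intro t
    ext i
    fin_cases i <;> simp [hv, e3]
  have hmem : ∀ t : ℝ, (t : ℂ) • v + s t • e3 ∈ hyp A kK lK mK E := by
    intro t
    rw [hX]
    have hre : (s t).re = t ^ 2 * u := by simp [hs, -Complex.ofReal_add, -Complex.ofReal_mul,
      -Complex.ofReal_pow]
    have him : (s t).im = t ^ 2 * N + t ^ 3 * M + e t := by
      simp [hs, -Complex.ofReal_add, -Complex.ofReal_mul, -Complex.ofReal_pow]
    have e1 : hermVal A ![(t : ℂ) * z 0, (t : ℂ) * z 1] = ((t ^ 2 : ℝ) : ℂ) * hermVal A z := by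
      simp [hermVal, Fin.sum_univ_two]
      ring
    have e2 : quadVal kK lK mK ![(t : ℂ) * z 0, (t : ℂ) * z 1] * conj ((t : ℂ) * ζ)
        = ((t ^ 3 : ℝ) : ℂ) * (quadVal kK lK mK z * conj ζ) := by
      simp [quadVal]
      ring
    show (s t).im = (hermVal A ![(t : ℂ) * z 0, (t : ℂ) * z 1]).re
        + 2 * (quadVal kK lK mK ![(t : ℂ) * z 0, (t : ℂ) * z 1] * conj ((t : ℂ) * ζ)).re
        + E (![(t : ℂ) * z 0, (t : ℂ) * z 1], (t : ℂ) * ζ, (s t).re)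
    rw [e1, e2, Complex.re_ofReal_mul, Complex.re_ofReal_mul, him, hre, hM, hN]
    ring
  refine jets_core A kT lT mT hEt hEt4
    (F := fun i => ![fun t : ℝ => f1 ((t : ℂ) • v + s t • e3), fun t : ℝ => f2 ((t : ℂ) • v + s t • e3)] i)
    (G := fun t => g ((t : ℂ) • v + s t • e3)) (H := fun t => h ((t : ℂ) • v + s t • e3))
    (a := ![L1 f1 v, L1 f2 v]) (a' := ![c * L1 f1 e3 + B2 (hess f1) v v,
            c * L1 f2 e3 + B2 (hess f2) v v]) (b := L1 g v) ?_ ?_ (xh v c d s hsO) ?_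
  · intro i
    fin_cases i
    · exact BO_three_of (xf1 v c d s hsO)
    · exact BO_three_of (xf2 v c d s hsO)
  · exact BO_two_of (BO_three_of (xg v c d s hsO))
  · filter_upwards [hX0.eventually hU] with t ht
    exact hmap _ ⟨hmem t, ht⟩

lemma pol3 (T : Fin 3 → Fin 3 → ℂ) (hT : ∀ k l, conj (T k l) = T l k)
    (H : ∀ x : Fin 3 → ℂ, (∑ k, ∑ l, T k l * x k * conj (x l)).re = 0) : ∀ k l, T k l = 0 := by
  have r : ∀ k l, (T k l).re = (T l k).re := fun k l => by rw [← hT k l, Complex.conj_re]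
  have m : ∀ k l, -(T k l).im = (T l k).im := fun k l => by rw [← hT k l, Complex.conj_im]
  have a0 := H ![1, 0, 0]
  have a1 := H ![0, 1, 0]
  have a2 := H ![0, 0, 1]
  have b0 := H ![1, 1, 0]
  have b1 := H ![1, 0, 1]
  have b2 := H ![0, 1, 1]
  have c0 := H ![1, Complex.I, 0]
  have c1 := H ![1, 0, Complex.I]
  have c2 := H ![0, 1, Complex.I]
  simp [Fin.sum_univ_three] at a0 a1 a2 b0 b1 b2 c0 c1 c2
  have r01 := r 0 1
  have r02 := r 0 2
  have r12 := r 1 2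
  have m00 := m 0 0
  have m11 := m 1 1
  have m22 := m 2 2
  have m01 := m 0 1
  have m02 := m 0 2
  have m12 := m 1 2
  intro k l
  apply Complex.ext <;> fin_cases k <;> fin_cases l <;> simp <;> linarith

lemma herm_entry {A : Matrix (Fin 2) (Fin 2) ℂ} (hA : A.conjTranspose = A) (i j : Fin 2) :
    conj (A i j) = A j i := by
  have := congrFun (congrFun hA j) i
  simpa [Matrix.conjTranspose_apply] using this

lemma herm_real {A : Matrix (Fin 2) (Fin 2) ℂ} (hA : A.conjTranspose = A) (z : Fin 2 → ℂ) :
    ((hermVal A z).re : ℂ) = hermVal A z := by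
  rw [← Complex.conj_eq_iff_re]
  simp only [hermVal, Fin.sum_univ_two, map_add, map_mul, herm_entry hA, Complex.conj_conj]
  ring

lemma herm_smul (A : Matrix (Fin 2) (Fin 2) ℂ) (s a b : ℂ) :
    hermVal A ![s * a, s * b] = s * conj s * hermVal A ![a, b] := by
  simp [hermVal, Fin.sum_univ_two]
  ring

lemma cross_re {A : Matrix (Fin 2) (Fin 2) ℂ} (hA : A.conjTranspose = A) (a a' : Fin 2 → ℂ) :
    (cross A a a').re = (2 * ∑ i, ∑ j, A i j * (a' i * conj (a j))).re := by
  have : cross A a a' = (∑ i, ∑ j, A i j * (a' i * conj (a j)))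
      + conj (∑ i, ∑ j, A i j * (a' i * conj (a j))) := by
    simp only [cross, Fin.sum_univ_two, map_add, map_mul, herm_entry hA, Complex.conj_conj]
    ring
  rw [this, two_mul, Complex.add_re, Complex.add_re, Complex.conj_re]

lemma extract {a b c d p q o p' p'' J : ℂ} (H : ∀ s r : ℂ, (s ^ 3 * a + s ^ 2 * r * b + s * r ^ 2 * c
    + r ^ 3 * d + conj s * (s ^ 2 * p + s * r * q + r ^ 2 * o) + s ^ 2 * conj s * p'
    + s * conj s ^ 2 * p'' + s ^ 2 * conj r * J).re = 0) : J = 0 := by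
  have key : ∀ s r : ℂ, (s ^ 2 * (r * b + conj r * J)).re = 0 := by
    intro s r
    have h1 := H s r
    have h2 := H s (-r)
    have h3 := H (Complex.I * s) r
    have h4 := H (Complex.I * s) (-r)
    have h5 : ∀ w x y z : ℂ, w.re = 0 → x.re = 0 → y.re = 0 → z.re = 0 →
      (w - x - y + z).re = 0 := by
      intro w x y z hw hx hy hz
      simp [hw, hx, hy, hz]
    have h6 := h5 _ _ _ _ h1 h2 h3 h4
    have h7 : ((4 : ℝ) * (s ^ 2 * (r * b + conj r * J)) : ℂ).re = 0 := by
      rw [← h6]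
      congr 1
      simp only [map_mul, map_neg, Complex.conj_I, mul_pow, Complex.I_sq, Complex.I_pow_three]
      push_cast
      linear_combination (-2 * s * conj s * r * q) * Complex.I_sq
    rw [Complex.re_ofReal_mul] at h7
    linarith
  have k1 := key 1 1
  have k2 := key 1 Complex.I
  have k3 := key (1 + Complex.I) 1
  have k4 := key (1 + Complex.I) Complex.I
  have e : (1 + Complex.I) ^ 2 = 2 * Complex.I := by linear_combination Complex.I_sq
  rw [e] at k3 k4
  simp at k1 k2 k3 k4
  apply Complex.ext <;> simp <;> linarith

lemma L1_vec (φ : (Fin 4 → ℂ) → ℂ) (a b c : ℂ) :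
    L1 φ ![a, b, c, 0] = a * pd 0 φ 0 + b * pd 1 φ 0 + c * pd 2 φ 0 := by
  simp [L1, Fin.sum_univ_four]

lemma L1_e3 (φ : (Fin 4 → ℂ) → ℂ) : L1 φ e3 = pd 3 φ 0 := by
  simp [L1, e3, Fin.sum_univ_four]

lemma vec_smul (s a b c : ℂ) : ![s * a, s * b, s * c, 0] = s • ![a, b, c, 0] + (0 : ℂ) • ![a, b, c, 0] := by
  ext i
  fin_cases i <;> simp

lemma vec_split (s r a b : ℂ) : ![s * a, s * b, r, 0] = s • ![a, b, 0, 0] + r • ![0, 0, 1, 0] := by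
  ext i
  fin_cases i <;> simp
/-- Normalization of the weight-≤3 jet of a local biholomorphism between two
hypersurfaces `Im w = ⟨z,z̄⟩ + 2Re(K(z,z) ζ̄) + O(4)` fixing the origin. -/
theorem stmt_3 (A : Matrix (Fin 2) (Fin 2) ℂ) (hherm : A.conjTranspose = A)
    (hnd : IsUnit A.det) (kK lK mK kT lT mT : ℂ)
    (E Et : (Fin 2 → ℂ) × ℂ × ℝ → ℝ)
    (hE : AnalyticAt ℝ E 0) (hEt : AnalyticAt ℝ Et 0)
    (hE4 : wOrder4 E) (hEt4 : wOrder4 Et)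
    (f1 f2 g h : (Fin 4 → ℂ) → ℂ) (U : Set (Fin 4 → ℂ)) (hU : U ∈ 𝓝 (0 : Fin 4 → ℂ))
    (hf1 : DifferentiableOn ℂ f1 U) (hf2 : DifferentiableOn ℂ f2 U)
    (hg : DifferentiableOn ℂ g U) (hh : DifferentiableOn ℂ h U)
    (h0 : f1 0 = 0 ∧ f2 0 = 0 ∧ g 0 = 0 ∧ h 0 = 0)
    (hjac : IsUnit (Matrix.det (Matrix.of fun i j : Fin 4 => pd j (![f1, f2, g, h] i) 0)))
    (hmap : ∀ p ∈ hyp A kK lK mK E ∩ U, ![f1 p, f2 p, g p, h p] ∈ hyp A kT lT mT Et) :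
    -- ∂f/∂ζ(0) = 0
    pd 2 f1 0 = 0 ∧ pd 2 f2 0 = 0 ∧
    -- first partials of h in z₁, z₂, ζ vanish at 0
    pd 0 h 0 = 0 ∧ pd 1 h 0 = 0 ∧ pd 2 h 0 = 0 ∧
    -- second partials of h in (z₁, z₂, ζ) vanish at 0
    (∀ i j : Fin 4, i ≠ 3 → j ≠ 3 → pd i (pd j h) 0 = 0) ∧
    -- ρ = ∂h/∂w(0) is a nonzero real number
    (pd 3 h 0).im = 0 ∧ pd 3 h 0 ≠ 0 ∧
    -- C = ∂f/∂z(0) is invertible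
    IsUnit (Matrix.det !![pd 0 f1 0, pd 1 f1 0; pd 0 f2 0, pd 1 f2 0]) ∧
    -- β = ∂g/∂ζ(0) ≠ 0
    pd 2 g 0 ≠ 0 ∧
    -- transformation rules for the forms
    (∀ z : Fin 2 → ℂ,
      hermVal A ((!![pd 0 f1 0, pd 1 f1 0; pd 0 f2 0, pd 1 f2 0]).mulVec z)
          = pd 3 h 0 * hermVal A z ∧
      quadVal kT lT mT ((!![pd 0 f1 0, pd 1 f1 0; pd 0 f2 0, pd 1 f2 0]).mulVec z)
          = (pd 3 h 0 / conj (pd 2 g 0)) * quadVal kK lK mK z) := by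
  have toHol : ∀ φ : (Fin 4 → ℂ) → ℂ, DifferentiableOn ℂ φ U → Hol φ := by
    intro φ hφ
    filter_upwards [eventually_eventually_nhds.2 hU] with p hp
    exact hφ.differentiableAt hp
  have Hf1 := toHol _ hf1
  have Hf2 := toHol _ hf2
  have Hg := toHol _ hg
  have Hh := toHol _ hh
  obtain ⟨c3, J⟩ := jets A kK lK mK kT lT mT E Et hE hEt hE4 hEt4 f1 f2 g h U hU Hf1 Hf2 Hg Hh h0 hmap
  -- first order
  have s1 : ∀ a b c : ℂ, L1 h ![a, b, c, 0] = 0 := by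
    intro a b c
    have h1 := (J ![a, b] c 0 _ _ _ rfl rfl rfl).1
    have h2 := (J ![Complex.I * a, Complex.I * b] (Complex.I * c) 0 _ _ _ rfl rfl rfl).1
    simp only [Matrix.cons_val_zero, Matrix.cons_val_one] at h1 h2
    rw [vec_smul, L1_comb] at h2
    simp at h2
    exact Complex.ext h2 h1
  have p0 : pd 0 h 0 = 0 := by simpa [L1_vec] using s1 1 0 0
  have p1 : pd 1 h 0 = 0 := by simpa [L1_vec] using s1 0 1 0
  have p2 : pd 2 h 0 = 0 := by simpa [L1_vec] using s1 0 0 1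
  set ρ := pd 3 h 0 with hρ
  have W2 : ∀ (a b c : ℂ) (u : ℝ), (((u : ℂ) + Complex.I * ((hermVal A ![a, b]).re : ℂ)) * ρ
      + B2 (hess h) ![a, b, c, 0] ![a, b, c, 0]).im
      = (hermVal A ![L1 f1 ![a, b, c, 0], L1 f2 ![a, b, c, 0]]).re := by
    intro a b c u
    have := ((J ![a, b] c u _ _ _ rfl rfl rfl).2 (s1 _ _ _)).1
    rw [L1_e3] at this
    simpa only [Matrix.cons_val_zero, Matrix.cons_val_one] using this
  have ρim : ρ.im = 0 := by
    have h1 := W2 0 0 0 1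
    have h2 := W2 0 0 0 0
    simp only [Complex.add_im, Complex.add_re, Complex.mul_im, Complex.mul_re] at h1 h2
    simp at h1 h2
    linarith
  have ρre : ((ρ.re : ℝ) : ℂ) = ρ := Complex.ext (by simp) (by simp [ρim])
  have W2' : ∀ a b c : ℂ, (hermVal A ![a, b]).re * ρ.re
      + (B2 (hess h) ![a, b, c, 0] ![a, b, c, 0]).im
      = (hermVal A ![L1 f1 ![a, b, c, 0], L1 f2 ![a, b, c, 0]]).re := by
    intro a b c
    rw [← W2 a b c 0]
    simp [ρim]
  have W2s : ∀ s a b c : ℂ, (s * conj s * hermVal A ![a, b]).re * ρ.re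
      + (s ^ 2 * B2 (hess h) ![a, b, c, 0] ![a, b, c, 0]).im
      = (s * conj s * hermVal A ![L1 f1 ![a, b, c, 0], L1 f2 ![a, b, c, 0]]).re := by
    intro s a b c
    have := W2' (s * a) (s * b) (s * c)
    rw [vec_smul, L1_comb, L1_comb, B2_comb, herm_smul] at this
    simp only [zero_mul, add_zero, mul_zero, ne_eq, OfNat.ofNat_ne_zero, not_false_eq_true,
      zero_pow] at this
    rwa [herm_smul] at this
  have Q0 : ∀ a b c : ℂ, B2 (hess h) ![a, b, c, 0] ![a, b, c, 0] = 0 := by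
    intro a b c
    have k1 := W2' a b c
    have k2 := W2s Complex.I a b c
    have k3 := W2s (1 + Complex.I) a b c
    have e : (1 + Complex.I) ^ 2 = 2 * Complex.I := by linear_combination Complex.I_sq
    have e' : (1 + Complex.I) * conj (1 + Complex.I) = ((2 : ℝ) : ℂ) := by
      simp only [map_add, map_one, Complex.conj_I]
      push_cast
      linear_combination -Complex.I_sq
    have e'' : Complex.I * conj Complex.I = ((1 : ℝ) : ℂ) := by
      simp
    rw [e, e', Complex.re_ofReal_mul, Complex.re_ofReal_mul] at k3
    rw [e'', Complex.re_ofReal_mul, Complex.re_ofReal_mul] at k2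
    simp at k2 k3
    apply Complex.ext <;> simp <;> linarith
  have N2 : ∀ a b c : ℂ, hermVal A ![L1 f1 ![a, b, c, 0], L1 f2 ![a, b, c, 0]]
      = ρ * hermVal A ![a, b] := by
    intro a b c
    have k1 := W2' a b c
    rw [Q0] at k1
    rw [← herm_real hherm, ← herm_real hherm ![a, b], ← k1, ← ρre]
    push_cast
    simp
    ring
  have sec : ∀ i j : Fin 4, i ≠ 3 → j ≠ 3 → pd i (pd j h) 0 = 0 := by
    have d0 := Q0 1 0 0
    have d1 := Q0 0 1 0
    have d2 := Q0 0 0 1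
    have d01 := Q0 1 1 0
    have d02 := Q0 1 0 1
    have d12 := Q0 0 1 1
    simp [B2, hess, Fin.sum_univ_four] at d0 d1 d2 d01 d02 d12
    have y01 := pd_symm Hh 0 1
    have y02 := pd_symm Hh 0 2
    have y12 := pd_symm Hh 1 2
    have x01 : pd 0 (pd 1 h) 0 = 0 := by linear_combination d01 - d0/2 - d1/2 + y01/2
    have x02 : pd 0 (pd 2 h) 0 = 0 := by linear_combination d02 - d0/2 - d2/2 + y02/2
    have x12 : pd 1 (pd 2 h) 0 = 0 := by linear_combination d12 - d1/2 - d2/2 + y12/2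
    intro i j hi hj
    fin_cases i <;> fin_cases j <;> simp at hi hj ⊢ <;>
      first | assumption | (rw [pd_symm Hh]; assumption)
  -- polarization
  set a0 := pd 0 f1 0 with ha0
  set a1 := pd 1 f1 0 with ha1
  set a2 := pd 2 f1 0 with ha2
  set b0 := pd 0 f2 0 with hb0
  set b1 := pd 1 f2 0 with hb1
  set b2 := pd 2 f2 0 with hb2
  set F : Fin 2 → Fin 3 → ℂ := ![![a0, a1, a2], ![b0, b1, b2]] with hF
  set A' : Fin 3 → Fin 3 → ℂ := ![![A 0 0, A 0 1, 0], ![A 1 0, A 1 1, 0], ![0, 0, 0]] with hA'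
  have T0 := pol3 (fun k l => (∑ i, ∑ j, A i j * F i k * conj (F j l)) - (ρ.re : ℂ) * A' k l)
    (by
      intro k l
      have hA'' : conj (A' k l) = A' l k := by
        fin_cases k <;> fin_cases l <;> simp [hA', herm_entry hherm]
      simp only [map_sub, map_mul, hA'', Complex.conj_ofReal, Fin.sum_univ_two, map_add,
        herm_entry hherm, Complex.conj_conj]
      ring)
    (by
      intro x
      have k := N2 (x 0) (x 1) (x 2)
      rw [L1_vec, L1_vec, ← sub_eq_zero] at k
      rw [← Complex.zero_re, ← k]
      congr 1
      simp [hermVal, Fin.sum_univ_two, Fin.sum_univ_three, hF, hA', ρre]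
      ring)
  have t00 := T0 0 0
  have t01 := T0 0 1
  have t10 := T0 1 0
  have t11 := T0 1 1
  have t02 := T0 0 2
  have t12 := T0 1 2
  simp [Fin.sum_univ_two, hF, hA', ρre] at t00 t01 t10 t11 t02 t12
  have hdetA : A 0 0 * A 1 1 - A 0 1 * A 1 0 ≠ 0 := by
    have := hnd.ne_zero
    rwa [Matrix.det_fin_two] at this
  have hjac' := hjac.ne_zero
  have hdet4 : Matrix.det (Matrix.of fun i j : Fin 4 => pd j (![f1, f2, g, h] i) 0)
      = ρ * (a0 * (b1 * pd 2 g 0 - b2 * pd 1 g 0) - a1 * (b0 * pd 2 g 0 - b2 * pd 0 g 0)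
        + a2 * (b0 * pd 1 g 0 - b1 * pd 0 g 0)) := by
    simp [Matrix.det_succ_row_zero, Fin.sum_univ_succ, Fin.succAbove, p0, p1, p2]
    simp only [hρ, ha0, ha1, ha2, hb0, hb1, hb2]
    ring
  rw [hdet4] at hjac'
  have ρ0 : ρ ≠ 0 := left_ne_zero_of_mul hjac'
  have hprod : ρ ^ 2 * (A 0 0 * A 1 1 - A 0 1 * A 1 0) = (A 0 0 * A 1 1 - A 0 1 * A 1 0)
      * (a0 * b1 - a1 * b0) * (conj a0 * conj b1 - conj a1 * conj b0) := by
    have e : ρ ^ 2 * (A 0 0 * A 1 1 - A 0 1 * A 1 0)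
      = (ρ * A 0 0) * (ρ * A 1 1) - (ρ * A 0 1) * (ρ * A 1 0) := by ring
    rw [e, ← sub_eq_zero.1 t00, ← sub_eq_zero.1 t01, ← sub_eq_zero.1 t10, ← sub_eq_zero.1 t11]
    ring
  have detC : a0 * b1 - a1 * b0 ≠ 0 := by
    intro hc
    rw [hc] at hprod
    simp only [mul_zero, zero_mul] at hprod
    exact (mul_ne_zero (pow_ne_zero 2 ρ0) hdetA) hprod
  have za2 : a2 = 0 := by
    have : (A 0 0 * A 1 1 - A 0 1 * A 1 0) * (a0 * b1 - a1 * b0) * conj a2 = 0 := by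
      linear_combination (A 0 1 * a1 + A 1 1 * b1) * t02 - (A 0 1 * a0 + A 1 1 * b0) * t12
    have := (mul_eq_zero.1 this).resolve_left (mul_ne_zero hdetA detC)
    simpa using this
  have zb2 : b2 = 0 := by
    have : (A 0 0 * A 1 1 - A 0 1 * A 1 0) * (a0 * b1 - a1 * b0) * conj b2 = 0 := by
      linear_combination (A 0 0 * a0 + A 1 0 * b0) * t12 - (A 0 0 * a1 + A 1 0 * b1) * t02
    have := (mul_eq_zero.1 this).resolve_left (mul_ne_zero hdetA detC)
    simpa using this
  have β0 : pd 2 g 0 ≠ 0 := by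
    intro hb
    apply hjac'
    rw [hb, za2, zb2]
    ring
  refine ⟨za2, zb2, p0, p1, p2, sec, ρim, ρ0, ?_, β0, ?_⟩
  · rw [Matrix.det_fin_two]
    simpa using detC
  intro z
  have hCz : (!![a0, a1; b0, b1]).mulVec z = ![z 0 * a0 + z 1 * a1, z 0 * b0 + z 1 * b1] := by
    ext i
    fin_cases i <;> simp [Matrix.mulVec, dotProduct, Fin.sum_univ_two] <;> ring
  have hz : z = ![z 0, z 1] := by
    ext i
    fin_cases i <;> rfl
  rw [hCz]
  constructor
  · have := N2 (z 0) (z 1) 0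
    rw [L1_vec, L1_vec, ← hz] at this
    simpa using this
  set x := z 0 * a0 + z 1 * a1 with hx
  set y := z 0 * b0 + z 1 * b1 with hy
  set β := pd 2 g 0 with hβ
  set N := (hermVal A ![z 0, z 1]).re with hN
  set v1 : Fin 4 → ℂ := ![z 0, z 1, 0, 0] with hv1
  set v2 : Fin 4 → ℂ := ![0, 0, 1, 0] with hv2
  set bh := hess h with hbh
  set l0 := 2 * (A 0 0 * conj x + A 0 1 * conj y) with hl0
  set l1 := 2 * (A 1 0 * conj x + A 1 1 * conj y) with hl1
  have key : 2 * (ρ * quadVal kK lK mK z - quadVal kT lT mT ![x, y] * conj β) = 0 := by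
    refine extract (a := -Complex.I * B3 c3 v1 v1 v1)
      (b := -Complex.I * (B3 c3 v1 v1 v2 + B3 c3 v1 v2 v1 + B3 c3 v2 v1 v1))
      (c := -Complex.I * (B3 c3 v1 v2 v2 + B3 c3 v2 v1 v2 + B3 c3 v2 v2 v1))
      (d := -Complex.I * B3 c3 v2 v2 v2)
      (p := N * (B2 bh v1 e3 + B2 bh e3 v1)
        - (l0 * B2 (hess f1) v1 v1 + l1 * B2 (hess f2) v1 v1))
      (q := N * (B2 bh v2 e3 + B2 bh e3 v2)
        - (l0 * (B2 (hess f1) v1 v2 + B2 (hess f1) v2 v1)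
          + l1 * (B2 (hess f2) v1 v2 + B2 (hess f2) v2 v1)))
      (o := -(l0 * B2 (hess f1) v2 v2 + l1 * B2 (hess f2) v2 v2))
      (p' := -2 * quadVal kT lT mT ![x, y] * conj (L1 g v1))
      (p'' := -(l0 * (Complex.I * N * pd 3 f1 0) + l1 * (Complex.I * N * pd 3 f2 0))) ?_
    intro s r
    have k := ((J ![s * z 0, s * z 1] r 0 _ _ _ rfl rfl rfl).2 (s1 _ _ _)).2
    simp only [Matrix.cons_val_zero, Matrix.cons_val_one] at k
    rw [cross_re hherm] at k
    rw [vec_split, ← hv1, ← hv2, L1_comb, L1_comb, L1_comb, B2_comb, B2_comb, B2_comb_left,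
      B2_comb_right, B3_comb, L1_e3, L1_e3, L1_e3, herm_smul, ← hρ] at k
    have x1 : L1 f1 v1 = x := by rw [hv1, L1_vec]; simp [hx, ha0, ha1]
    have y1 : L1 f2 v1 = y := by rw [hv1, L1_vec]; simp [hy, hb0, hb1]
    have x2 : L1 f1 v2 = 0 := by rw [hv2, L1_vec]; simp [← ha2, za2]
    have y2 : L1 f2 v2 = 0 := by rw [hv2, L1_vec]; simp [← hb2, zb2]
    have g2 : L1 g v2 = β := by rw [hv2, L1_vec]; simp [hβ]
    rw [x1, y1, x2, y2, g2] at k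
    have hNs : ((s * conj s * hermVal A ![z 0, z 1]).re : ℂ) = s * conj s * N := by
      rw [Complex.mul_conj, Complex.re_ofReal_mul]
      push_cast
      rfl
    rw [hNs] at k
    have hqK : quadVal kK lK mK ![s * z 0, s * z 1] = s ^ 2 * quadVal kK lK mK z := by
      simp [quadVal]
      ring
    have hqT : quadVal kT lT mT ![s * x + r * 0, s * y + r * 0]
        = s ^ 2 * quadVal kT lT mT ![x, y] := by
      simp [quadVal]
      ring
    rw [hqK, hqT] at k
    simp only [Fin.sum_univ_two, Matrix.cons_val_zero, Matrix.cons_val_one] at k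
    have imre : ∀ w : ℂ, w.im = (-Complex.I * w).re := fun w => by simp
    have hd : (Complex.I * ((2 * (s ^ 2 * quadVal kK lK mK z * conj r).re : ℝ) : ℂ) * ρ).im
        = (2 * ρ * (s ^ 2 * quadVal kK lK mK z * conj r)).re := by
      rw [← ρre]
      have e : 2 * ((ρ.re : ℝ) : ℂ) * (s ^ 2 * quadVal kK lK mK z * conj r)
        = ((2 * ρ.re : ℝ) : ℂ) * (s ^ 2 * quadVal kK lK mK z * conj r) := by
        push_cast
        ring
      rw [e, Complex.re_ofReal_mul]
      rw [mul_assoc, ← Complex.ofReal_mul, Complex.I_mul_im, Complex.ofReal_re]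
      ring
    have two_re : ∀ w : ℂ, 2 * w.re = (2 * w).re := fun w => by simp
    rw [Complex.add_im, Complex.add_im, hd, imre, imre (_ + _), two_re, ← sub_eq_zero,
      ← Complex.add_re, ← Complex.add_re, ← Complex.add_re, ← Complex.sub_re] at k
    rw [← k]
    congr 1
    simp only [hl0, hl1, map_add, map_mul, map_zero, mul_zero, add_zero, Complex.ofReal_zero,
      zero_add]
    linear_combination (s * conj s * N * (s * B2 bh v1 e3 + r * B2 bh v2 e3
      + (s * B2 bh e3 v1 + r * B2 bh e3 v2))) * Complex.I_sq
  rw [div_mul_eq_mul_div, eq_div_iff (by simpa using β0)]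
  linear_combination -key / 2
end

section
/- For all parameters d, κ, l, n ∈ ℝ and a, b, c, m, M, N ∈ ℂ, the polynomial 4-tuple (f, g, h, e) given by f(z₁,z₂,ζ,w) = a − 2·conj(c)·z₂ + i·κ·ζ + M·z₁ + m·ζ² + 2i·conj(N)·z₁·ζ + N·w, g = b + (2M − 3l)·z₂ − conj(m)·ζ + 2i·conj(N)·z₂·ζ − i·N·z₁ + i·n·ζ², h = c + (3l − conj(M))·ζ + i·conj(N)·ζ², e = d + 2i·conj(a)·ζ + 2i·conj(c)·z₁ + 2i·conj(b)·ζ² + 3l·w + 2i·conj(N)·ζ·w, is tangent to Q on all of ℂ⁴; that is, for every (z₁, z₂, ζ, w) ∈ Q one has Im(e) = 2Re( f·conj(ζ) + g·conj(ζ)² + h·(conj(z₁) + 2·conj(z₂)·ζ) ), where f, g, h, e are evaluated at (z₁, z₂, ζ, w). -/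
open Complex ComplexConjugate

/-- For all parameters `d κ l n ∈ ℝ`, `a b c m M N ∈ ℂ`, the explicit polynomial
4-tuple `(f, g, h, e)` is tangent to the model hypersurface
`Q = {Im w = 2 Re (z₁ ζ̄) + 2 Re (z₂ ζ̄²)}` at every point of `Q`. -/
theorem stmt_7 (d κ l n : ℝ) (a b c m M N : ℂ) (z1 z2 ζ w : ℂ)
    (hQ : w.im = 2 * (z1 * conj ζ).re + 2 * (z2 * (conj ζ) ^ 2).re) :
    ((d : ℂ) + 2 * I * conj a * ζ + 2 * I * conj c * z1 + 2 * I * conj b * ζ ^ 2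
        + 3 * (l : ℂ) * w + 2 * I * conj N * ζ * w).im =
      2 * ((a - 2 * conj c * z2 + I * (κ : ℂ) * ζ + M * z1 + m * ζ ^ 2
              + 2 * I * conj N * z1 * ζ + N * w) * conj ζ
          + (b + (2 * M - 3 * (l : ℂ)) * z2 - conj m * ζ + 2 * I * conj N * z2 * ζ
              - I * N * z1 + I * (n : ℂ) * ζ ^ 2) * (conj ζ) ^ 2
          + (c + (3 * (l : ℂ) - conj M) * ζ + I * conj N * ζ ^ 2)
              * (conj z1 + 2 * conj z2 * ζ)).re := by
  obtain ⟨w1, w2⟩ := w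
  simp only [pow_two, add_re, add_im, sub_re, sub_im, mul_re, mul_im, conj_re, conj_im,
    ofReal_re, ofReal_im, I_re, I_im, re_ofNat, im_ofNat] at hQ ⊢
  subst hQ
  ring
end
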